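/- Let [0,1)^d + T be a cube tiling of ℝ^d. If r^+(T) > 2^{d−3}/3, then the tiling [0,1)^d + T contains a twin pair. -/

import Mathlib

/-- The half-open unit cube `[0,1)^d` translated by `t`. -/
def cube {d : ℕ} (t : Fin d → ℝ) : Set (Fin d → ℝ) :=
  {x | ∀ i, t i ≤ x i ∧ x i < t i + 1}

/-- `[0,1)^d + T` is a cube tiling of `ℝ^d`: the translated cubes are pairwise
disjoint and their union is all of `ℝ^d`. -/
def IsCubeTiling {d : ℕ} (T : Set (Fin d → ℝ)) : Prop :=
  (⋃ t ∈ T, cube t) = Set.univ ∧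
    T.Pairwise fun t s => Disjoint (cube t) (cube s)

/-- The cubes `[0,1)^d + t` and `[0,1)^d + s` form a twin pair. -/
def IsTwinPair {d : ℕ} (t s : Fin d → ℝ) : Prop :=
  ∃ j, |t j - s j| = 1 ∧ ∀ i, i ≠ j → t i = s i

/-- `L T x i` is the set of `i`-th coordinates `t i` of vectors `t ∈ T` such that
`([0,1)^d + t) ∩ ([0,1)^d + x) ≠ ∅` and `t i ≤ x i`. -/
def L {d : ℕ} (T : Set (Fin d → ℝ)) (x : Fin d → ℝ) (i : Fin d) : Set ℝ :=
  {r | ∃ t ∈ T, t i = r ∧ (cube t ∩ cube x).Nonempty ∧ t i ≤ x i}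

/-- `r⁺(T) = max_{x ∈ ℝ^d} max_{1 ≤ i ≤ d} |L(T,x,i)|`. -/
noncomputable def rplus {d : ℕ} (T : Set (Fin d → ℝ)) : ℕ :=
  ⨆ x : Fin d → ℝ, ⨆ i : Fin d, (L T x i).ncard

/-!
Suppose that the tiling has no twin pair, and let `[0,1)^d + x` be a test cube in general position.
A cube `[0,1)^d + t` meeting it is recorded by a word whose `j`-th letter consists of a base, the
residue of `t j` modulo `1`, and of a sign, the side on which it sticks out of the test cube. These
words tile the discrete box of all choices of one sign per base and coordinate: every such choice is
realised by exactly one word. This is clear for the choices given by points of the test cube and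
follows for the others, one coordinate at a time, by comparing points on either side of a facet.

Fix a coordinate `i` and a base `r`. The words with letter `(r, true)` at `i` and those with letter
`(r, false)` tile the same part of the box once coordinate `i` is ignored, and they have no word in
common and no twins among them. Two such families always have at least `24` words in total. At most
`2 ^ d` cubes meet the test cube, hence at most `2 ^ d / 24` bases occur in coordinate `i`, and
`L T x i` is a set of such bases.

For the bound `24`, take words `v` and `w`, one from each family, that are nowhere complementary and
differ on a set `K` of coordinates which is as large as possible. Expanding the equality of the two
tilings in the characters of the signs gives parity conditions on the words that have the bases of
`v` on part of `K`. They force `4 ≤ #K` and at least `12` words whose bases are close to those of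
`v`, and likewise for `w`. Since the bases of `v` and `w` differ everywhere on `K`, no word is close
to both; only one configuration with `#K = 4` needs a finer count.
-/

open Finset

namespace PolyboxCode

variable {ι R : Type*}

/-! ### Letters, words and patterns -/

/-- A word over the alphabet `R × Bool`; the letters `(r, true)` and `(r, false)` are complementary.
In a cube tiling a letter records a coordinate modulo `1` together with the side of the test cube
on which it lies. -/
abbrev Word (ι R : Type*) := ι → R × Bool

/-- The complementary letter: same base, opposite sign. -/
def opp (a : R × Bool) : R × Bool := (a.1, !a.2)

@[simp] lemma opp_fst (a : R × Bool) : (opp a).1 = a.1 := rfl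

@[simp] lemma opp_snd (a : R × Bool) : (opp a).2 = !a.2 := rfl

@[simp] lemma opp_opp (a : R × Bool) : opp (opp a) = a := by simp [opp]

lemma opp_ne_self (a : R × Bool) : opp a ≠ a := by simp [opp, Prod.ext_iff]

lemma eq_opp_comm {a b : R × Bool} : a = opp b ↔ b = opp a := by
  constructor <;> rintro rfl <;> simp

lemma eq_or_eq_opp_of_fst_eq {a b : R × Bool} (h : a.1 = b.1) : a = b ∨ a = opp b := by
  rcases Bool.eq_or_eq_not a.2 b.2 with hs | hs
  · exact .inl (Prod.ext h hs)
  · exact .inr (Prod.ext h hs)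

lemma eq_opp_of_fst_eq_of_snd_ne {a b : R × Bool} (h : a.1 = b.1) (hs : a.2 ≠ b.2) : a = opp b :=
  (eq_or_eq_opp_of_fst_eq h).resolve_left fun hab => hs (congrArg Prod.snd hab)

/-- A selector `q : R → Bool` selects one letter of every complementary pair, namely `(r, q r)`. -/
def Fits (q : R → Bool) (a : R × Bool) : Prop := q a.1 = a.2

lemma Fits.ne_opp {q : R → Bool} {a b : R × Bool} (ha : Fits q a) (hb : Fits q b) : a ≠ opp b := by
  rintro rfl
  simp_all [Fits]

lemma Fits.eq_of_fst_eq {q : R → Bool} {a b : R × Bool} (ha : Fits q a) (hb : Fits q b)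
    (h : a.1 = b.1) : a = b :=
  (eq_or_eq_opp_of_fst_eq h).resolve_right (ha.ne_opp hb)

/-- A pattern is a selector in every coordinate; `FitsWord p u` says that it selects the word `u`.
Patterns are the vertices of a (possibly infinite) discrete box in which every word is a polybox. -/
def FitsWord (p : ι → R → Bool) (u : Word ι R) : Prop := ∀ i, Fits (p i) (u i)

attribute [local instance] Classical.propDecidable

/-- The pattern `p`, changed so as to select the letter `a` in coordinate `i`. -/
noncomputable def setLetter (p : ι → R → Bool) (i : ι) (a : R × Bool) : ι → R → Bool :=
  Function.update p i (Function.update (p i) a.1 a.2)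

lemma setLetter_of_ne (p : ι → R → Bool) {i j : ι} (h : j ≠ i) (a : R × Bool) :
    setLetter p i a j = p j :=
  Function.update_of_ne h _ _

lemma fits_setLetter_self (p : ι → R → Bool) (i : ι) (a : R × Bool) :
    Fits (setLetter p i a i) a := by
  simp [setLetter, Fits]

lemma fits_setLetter_iff_of_fst_ne {p : ι → R → Bool} {i : ι} {a b : R × Bool} (h : b.1 ≠ a.1) :
    Fits (setLetter p i a i) b ↔ Fits (p i) b := by
  simp [setLetter, Fits, h]

/-! ### Signs -/

/-- The sign `±1` of a letter with second component `b`. -/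
def boolSign (b : Bool) : ℤ := if b then 1 else -1

lemma boolSign_eq_or (b : Bool) : boolSign b = 1 ∨ boolSign b = -1 := by cases b <;> simp [boolSign]

lemma boolSign_mul (a b : Bool) : boolSign a * boolSign b = if a ≠ b then -1 else 1 := by
  cases a <;> cases b <;> simp [boolSign]

/-- The product of the signs of `u` over the coordinates in `S`. -/
def signProd (S : Finset ι) (u : Word ι R) : ℤ := ∏ i ∈ S, boolSign (u i).2

@[simp] lemma signProd_singleton (i : ι) (u : Word ι R) : signProd {i} u = boolSign (u i).2 := by
  simp [signProd]

lemma signProd_eq_or (S : Finset ι) (u : Word ι R) : signProd S u = 1 ∨ signProd S u = -1 :=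
  Finset.prod_induction _ (fun n : ℤ => n = 1 ∨ n = -1)
    (by rintro _ _ (rfl | rfl) (rfl | rfl) <;> simp) (.inl rfl) fun i _ => boolSign_eq_or (u i).2

lemma signProd_sdiff {M K : Finset ι} (hM : M ⊆ K) (u : Word ι R) :
    signProd (K \ M) u = signProd K u * signProd M u := by
  have hsq : signProd M u * signProd M u = 1 := by
    rcases signProd_eq_or M u with h | h <;> simp [h]
  rw [signProd, signProd, ← Finset.prod_sdiff hM, mul_assoc]
  exact (mul_one _).symm.trans (congrArg _ hsq.symm)

/-- The coordinates in `K` at which `u` and `v` have different signs. -/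
def signDiff (K : Finset ι) (u v : Word ι R) : Finset ι := {i ∈ K | (u i).2 ≠ (v i).2}

lemma mem_signDiff {K : Finset ι} {u v : Word ι R} {i : ι} :
    i ∈ signDiff K u v ↔ i ∈ K ∧ (u i).2 ≠ (v i).2 := by
  simp [signDiff]

lemma signProd_mul_signProd (K : Finset ι) (u v : Word ι R) :
    signProd K u * signProd K v = (-1) ^ #(signDiff K u v) := by
  simp only [signProd, signDiff, ← Finset.prod_mul_distrib, boolSign_mul]
  rw [Finset.prod_ite]
  simp

lemma odd_card_signDiff {K : Finset ι} {u v : Word ι R} (h : signProd K u ≠ signProd K v) :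
    Odd #(signDiff K u v) := by
  have hmul := signProd_mul_signProd K u v
  rw [← Nat.not_even_iff_odd]
  intro heven
  rw [heven.neg_one_pow] at hmul
  rcases signProd_eq_or K u with hu | hu <;> rcases signProd_eq_or K v with hv | hv <;> simp_all

lemma sum_boolSign_mul_boolSign (K : Finset ι) (u v : Word ι R) :
    ∑ i ∈ K, boolSign (u i).2 * boolSign (v i).2 = #K - 2 * #(signDiff K u v) := by
  have hterm (i : ι) : boolSign (u i).2 * boolSign (v i).2 =
      1 - 2 * if (u i).2 ≠ (v i).2 then 1 else 0 := by
    rw [boolSign_mul]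
    split_ifs <;> rfl
  simp only [hterm, Finset.sum_sub_distrib, ← Finset.mul_sum, Finset.sum_boole]
  simp [signDiff]

lemma even_sum_add_card_of_unit {α : Type*} {s : Finset α} {f : α → ℤ}
    (h : ∀ a ∈ s, f a = 1 ∨ f a = -1) : Even (∑ a ∈ s, f a + #s) := by
  rw [Finset.cast_card, ← Finset.sum_add_distrib]
  exact Finset.even_sum _ fun a ha => by rcases h a ha with h | h <;> simp [h]

lemma abs_sum_le_card_of_unit {α : Type*} {s : Finset α} {f : α → ℤ}
    (h : ∀ a ∈ s, f a = 1 ∨ f a = -1) : |∑ a ∈ s, f a| ≤ #s := by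
  simpa using (Finset.abs_sum_le_sum_abs f s).trans
    (Finset.sum_le_sum (g := fun _ => 1) fun a ha => by rcases h a ha with h | h <;> simp [h])

/-! ### Rival codes -/

/-- A family of words, any two of which are complementary in some coordinate, but never in exactly
one coordinate while agreeing in all the others. -/
structure IsTwinFreeCode (V : Finset (Word ι R)) : Prop where
  exists_eq_opp : ∀ u ∈ V, ∀ v ∈ V, u ≠ v → ∃ i, u i = opp (v i)
  exists_ne : ∀ u ∈ V, ∀ v ∈ V, ∀ i, u i = opp (v i) → ∃ j, j ≠ i ∧ u j ≠ v j

/-- Two disjoint twin-free codes that tile the same part of the box: every pattern selects equally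
many words from both. -/
structure RivalCodes (V W : Finset (Word ι R)) : Prop where
  left : IsTwinFreeCode V
  right : IsTwinFreeCode W
  disjoint : Disjoint V W
  card_fits : ∀ p, #{u ∈ V | FitsWord p u} = #{u ∈ W | FitsWord p u}

/-- The word `u` has the bases of `v` on `S` and fits the pattern `p` outside `K`. For `S ⊆ K` it is
unrestricted on `K \ S`. -/
def InSlice (S K : Finset ι) (p : ι → R → Bool) (v u : Word ι R) : Prop :=
  ∀ i, (i ∈ S → (u i).1 = (v i).1) ∧ (i ∉ K → Fits (p i) (u i))

/-- The words of `U` in the slice described by `InSlice`. -/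
noncomputable def slice (U : Finset (Word ι R)) (S K : Finset ι) (p : ι → R → Bool)
    (v : Word ι R) : Finset (Word ι R) :=
  {u ∈ U | InSlice S K p v u}

/-- The weight `1` on `V` and `-1` outside of `V`. -/
noncomputable def sideSign (V : Finset (Word ι R)) (u : Word ι R) : ℤ := if u ∈ V then 1 else -1

lemma mem_slice {U : Finset (Word ι R)} {S K : Finset ι} {p : ι → R → Bool} {u v : Word ι R} :
    u ∈ slice U S K p v ↔
      u ∈ U ∧ (∀ i ∈ S, (u i).1 = (v i).1) ∧ ∀ i ∉ K, Fits (p i) (u i) := by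
  simp only [slice, InSlice, mem_filter, forall_and]

lemma slice_subset {U : Finset (Word ι R)} {S K : Finset ι} {p : ι → R → Bool} {v : Word ι R} :
    slice U S K p v ⊆ U :=
  filter_subset _ _

lemma slice_anti {U : Finset (Word ι R)} {S S' K : Finset ι} {p : ι → R → Bool} {v : Word ι R}
    (h : S ⊆ S') : slice U S' K p v ⊆ slice U S K p v := fun u hu => by
  obtain ⟨hU, hS, hK⟩ := mem_slice.1 hu
  exact mem_slice.2 ⟨hU, fun i hi => hS i (h hi), hK⟩

lemma sideSign_of_mem {V : Finset (Word ι R)} {u : Word ι R} (hu : u ∈ V) : sideSign V u = 1 :=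
  if_pos hu

lemma sideSign_mul_signProd_eq_or (V : Finset (Word ι R)) (S : Finset ι) (u : Word ι R) :
    sideSign V u * signProd S u = 1 ∨ sideSign V u * signProd S u = -1 := by
  rcases signProd_eq_or S u with h | h <;> unfold sideSign <;> split_ifs <;> simp [h]

namespace RivalCodes

variable {V W : Finset (Word ι R)}

lemma symm (h : RivalCodes V W) : RivalCodes W V :=
  ⟨h.right, h.left, h.disjoint.symm, fun p => (h.card_fits p).symm⟩

lemma exists_left_of_right (h : RivalCodes V W) {p : ι → R → Bool} {w : Word ι R} (hw : w ∈ W)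
    (hp : FitsWord p w) : ∃ u ∈ V, FitsWord p u := by
  have hpos : 0 < #{u ∈ V | FitsWord p u} := by
    rw [h.card_fits]
    exact card_pos.2 ⟨w, mem_filter.2 ⟨hw, hp⟩⟩
  obtain ⟨u, hu⟩ := card_pos.1 hpos
  exact ⟨u, (mem_filter.1 hu).1, (mem_filter.1 hu).2⟩

lemma sideSign_right (h : RivalCodes V W) {u : Word ι R} (hu : u ∈ W) : sideSign V u = -1 :=
  if_neg (Finset.disjoint_right.1 h.disjoint hu)

section Fintype

variable [Fintype ι]

lemma sum_prod_fits (h : RivalCodes V W) (p : ι → R → Bool) :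
    ∑ u ∈ V, ∏ i, (if Fits (p i) (u i) then (1 : ℤ) else 0) =
      ∑ u ∈ W, ∏ i, if Fits (p i) (u i) then (1 : ℤ) else 0 := by
  have hprod (u : Word ι R) : ∏ i, (if Fits (p i) (u i) then (1 : ℤ) else 0) =
      if FitsWord p u then 1 else 0 := by
    rw [Finset.prod_boole]
    congr! 1
    simp only [mem_univ, true_imp_iff, FitsWord]
  simp only [hprod, Finset.sum_boole, h.card_fits p]

lemma sum_prod_eq_of_combination (h : RivalCodes V W) {φ : ι → R × Bool → ℤ}
    (hφ : ∀ i, ∃ (c d : ℤ) (P Q : R → Bool), ∀ a,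
      φ i a = c * (if Fits P a then 1 else 0) + d * if Fits Q a then 1 else 0) :
    ∑ u ∈ V, ∏ i, φ i (u i) = ∑ u ∈ W, ∏ i, φ i (u i) := by
  choose c d P Q hφ using hφ
  have hexpand (u : Word ι R) : ∏ i, φ i (u i) =
      ∑ t ∈ (univ : Finset ι).powerset, ((∏ i ∈ t, c i) * ∏ i ∈ univ \ t, d i) *
        ∏ i, if Fits (if i ∈ t then P i else Q i) (u i) then (1 : ℤ) else 0 := by
    simp only [hφ]
    rw [Finset.prod_add]
    refine Finset.sum_congr rfl fun t _ => ?_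
    have hsplit : ∏ i, (if Fits (if i ∈ t then P i else Q i) (u i) then (1 : ℤ) else 0) =
        (∏ i ∈ t, if Fits (P i) (u i) then 1 else 0) *
          ∏ i ∈ univ \ t, if Fits (Q i) (u i) then 1 else 0 := by
      rw [← Finset.prod_sdiff (subset_univ t), mul_comm]
      congr 1 <;> exact Finset.prod_congr rfl fun i hi => by simp_all
    rw [Finset.prod_mul_distrib, Finset.prod_mul_distrib, hsplit]
    ring
  simp only [hexpand]
  rw [Finset.sum_comm, Finset.sum_comm (s := W)]
  refine Finset.sum_congr rfl fun t _ => ?_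
  rw [← Finset.mul_sum, ← Finset.mul_sum, h.sum_prod_fits]

end Fintype

variable [Finite ι]

lemma card_eq (h : RivalCodes V W) : #V = #W := by
  have := Fintype.ofFinite ι
  have := h.sum_prod_eq_of_combination (φ := fun _ _ => 1)
    fun _ => ⟨1, 1, fun _ => true, fun _ => false, by rintro ⟨r, _ | _⟩ <;> simp [Fits]⟩
  simpa using this

lemma sum_signProd_slice_eq (h : RivalCodes V W) {S K : Finset ι} (hS : S ⊆ K)
    (p : ι → R → Bool) (v : Word ι R) :
    ∑ u ∈ slice V S K p v, signProd S u = ∑ u ∈ slice W S K p v, signProd S u := by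
  have := Fintype.ofFinite ι
  let φ (i : ι) (a : R × Bool) : ℤ :=
    (if (i ∈ S → a.1 = (v i).1) ∧ (i ∉ K → Fits (p i) a) then 1 else 0) *
      if i ∈ S then boolSign a.2 else 1
  have hprod (u : Word ι R) : (if InSlice S K p v u then signProd S u else 0) =
      ∏ i, φ i (u i) := by
    rw [Finset.prod_mul_distrib, Finset.prod_boole, Finset.prod_ite_mem, univ_inter]
    simp only [ite_mul, one_mul, zero_mul]
    congr! 1
    simp only [mem_univ, true_imp_iff, InSlice]
  simp only [slice, Finset.sum_filter, hprod]
  refine h.sum_prod_eq_of_combination fun i => ?_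
  by_cases hiS : i ∈ S
  · refine ⟨1, -1, fun _ => true, fun r => if r = (v i).1 then false else true, ?_⟩
    rintro ⟨r, _ | _⟩ <;> by_cases hr : r = (v i).1 <;>
      simp [φ, hiS, hS hiS, hr, Fits, boolSign]
  · by_cases hiK : i ∈ K
    · refine ⟨1, 1, fun _ => true, fun _ => false, ?_⟩
      rintro ⟨r, _ | _⟩ <;> simp [φ, hiS, hiK, Fits]
    · exact ⟨1, 0, p i, p i, fun a => by simp [φ, hiS, hiK]⟩

-- On a coordinate of `S` the two signs of a base cancel, so the sum does not see other bases there.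
lemma sum_slice_eq_zero (h : RivalCodes V W) {S K : Finset ι} (hS : S ⊆ K)
    (p : ι → R → Bool) (v : Word ι R) :
    ∑ u ∈ slice (V ∪ W) S K p v, sideSign V u * signProd S u = 0 := by
  have hleft : ∑ u ∈ slice V S K p v, sideSign V u * signProd S u =
      ∑ u ∈ slice V S K p v, signProd S u :=
    Finset.sum_congr rfl fun u hu => by rw [sideSign_of_mem (slice_subset hu), one_mul]
  have hright : ∑ u ∈ slice W S K p v, sideSign V u * signProd S u =
      -∑ u ∈ slice W S K p v, signProd S u := by
    rw [← Finset.sum_neg_distrib]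
    exact Finset.sum_congr rfl fun u hu => by rw [h.sideSign_right (slice_subset hu), neg_one_mul]
  have hunion : slice (V ∪ W) S K p v = slice V S K p v ∪ slice W S K p v := filter_union _ _ _
  rw [hunion, Finset.sum_union (h.disjoint.mono slice_subset slice_subset), hleft, hright,
    h.sum_signProd_slice_eq hS, add_neg_cancel]

lemma even_card_slice (h : RivalCodes V W) {S K : Finset ι} (hS : S ⊆ K)
    (p : ι → R → Bool) (v : Word ι R) : Even #(slice (V ∪ W) S K p v) := by
  have heven := even_sum_add_card_of_unit (s := slice (V ∪ W) S K p v)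
    fun u _ => sideSign_mul_signProd_eq_or V S u
  rw [h.sum_slice_eq_zero hS, zero_add] at heven
  exact_mod_cast heven

lemma abs_sum_slice_le (h : RivalCodes V W) {K M : Finset ι} (p : ι → R → Bool) (v : Word ι R) :
    |∑ u ∈ slice (V ∪ W) K K p v, sideSign V u * signProd (K \ M) u| ≤
      #(slice (V ∪ W) (K \ M) K p v \ slice (V ∪ W) K K p v) := by
  have hzero := h.sum_slice_eq_zero (sdiff_subset (s := K) (t := M)) p v
  rw [← Finset.sum_sdiff (slice_anti sdiff_subset)] at hzero
  rw [eq_neg_of_add_eq_zero_right hzero, abs_neg]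
  exact abs_sum_le_card_of_unit fun u _ => sideSign_mul_signProd_eq_or V _ u

end RivalCodes

/-! ### Deviation of the bases -/

/-- The coordinates in `K` at which `u` and `v` have different bases. -/
noncomputable def baseDiff (K : Finset ι) (v u : Word ι R) : Finset ι :=
  {i ∈ K | (u i).1 ≠ (v i).1}

/-- The words of `U` whose bases deviate from those of `v` somewhere in `K`, but only inside `M`. -/
noncomputable def devWithin (U : Finset (Word ι R)) (K : Finset ι) (v : Word ι R) (M : Finset ι) :
    Finset (Word ι R) :=
  {u ∈ U | baseDiff K v u ⊆ M ∧ (baseDiff K v u).Nonempty}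

/-- The words of `U` whose bases deviate from those of `v` in at most `r` coordinates of `K`. -/
noncomputable def baseBall (U : Finset (Word ι R)) (K : Finset ι) (v : Word ι R) (r : ℕ) :
    Finset (Word ι R) :=
  {u ∈ U | #(baseDiff K v u) ≤ r}

lemma mem_baseDiff {K : Finset ι} {u v : Word ι R} {i : ι} :
    i ∈ baseDiff K v u ↔ i ∈ K ∧ (u i).1 ≠ (v i).1 := by
  simp [baseDiff]

lemma baseDiff_eq_empty {K : Finset ι} {u v : Word ι R} :
    baseDiff K v u = ∅ ↔ ∀ i ∈ K, (u i).1 = (v i).1 := by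
  simp [baseDiff, filter_eq_empty_iff]

lemma mem_devWithin {U : Finset (Word ι R)} {K M : Finset ι} {u v : Word ι R} :
    u ∈ devWithin U K v M ↔ u ∈ U ∧ baseDiff K v u ⊆ M ∧ (baseDiff K v u).Nonempty := by
  simp [devWithin]

@[simp] lemma devWithin_empty (U : Finset (Word ι R)) (K : Finset ι) (v : Word ι R) :
    devWithin U K v ∅ = ∅ := by
  ext u
  simp [mem_devWithin, Finset.nonempty_iff_ne_empty]

lemma disjoint_devWithin {U : Finset (Word ι R)} {K M N : Finset ι} {v : Word ι R}
    (h : Disjoint M N) : Disjoint (devWithin U K v M) (devWithin U K v N) := by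
  rw [Finset.disjoint_left]
  intro u huM huN
  obtain ⟨-, hM, i, hi⟩ := mem_devWithin.1 huM
  exact Finset.disjoint_left.1 h (hM hi) ((mem_devWithin.1 huN).2.1 hi)

lemma slice_sdiff_slice_subset_devWithin {U : Finset (Word ι R)} {K M : Finset ι}
    {p : ι → R → Bool} {v : Word ι R} :
    slice U (K \ M) K p v \ slice U K K p v ⊆ devWithin U K v M := by
  intro u hu
  obtain ⟨hu, hnot⟩ := mem_sdiff.1 hu
  obtain ⟨hU, hbase, hfits⟩ := mem_slice.1 hu
  refine mem_devWithin.2 ⟨hU, fun i hi => ?_, Finset.nonempty_iff_ne_empty.2 fun hempty => ?_⟩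
  · obtain ⟨hiK, hne⟩ := mem_baseDiff.1 hi
    by_contra hiM
    exact hne (hbase i (mem_sdiff.2 ⟨hiK, hiM⟩))
  · exact hnot (mem_slice.2 ⟨hU, baseDiff_eq_empty.1 hempty, hfits⟩)

/-! ### Extremal pairs and their cores -/

/-- Words `v ∈ V` and `w ∈ W` of rival codes that are selected by a common pattern `p` and differ
exactly on `K`, where `K` is as large as possible among all pairs of words from `V` and `W` that are
nowhere complementary. -/
structure ExtremalPair (V W : Finset (Word ι R)) (K : Finset ι) (p : ι → R → Bool)
    (v w : Word ι R) : Prop where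
  rival : RivalCodes V W
  left_mem : v ∈ V
  right_mem : w ∈ W
  fst_ne : ∀ i ∈ K, (v i).1 ≠ (w i).1
  eq_off : ∀ i ∉ K, v i = w i
  fits_left : FitsWord p v
  fits_right : FitsWord p w
  maximal : ∀ x ∈ V, ∀ y ∈ W, (∀ i, x i ≠ opp (y i)) → {i | x i ≠ y i}.ncard ≤ #K

/-- The words of `V` that have the bases of `v` on `K` and fit `p` elsewhere. -/
noncomputable abbrev core (V : Finset (Word ι R)) (K : Finset ι) (p : ι → R → Bool)
    (v : Word ι R) : Finset (Word ι R) :=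
  slice V K K p v

/-- The words of the core with an even number of negative letters on `K`. -/
noncomputable def posCore (V : Finset (Word ι R)) (K : Finset ι) (p : ι → R → Bool)
    (v : Word ι R) : Finset (Word ι R) :=
  {u ∈ core V K p v | signProd K u = 1}

/-- The words of the core with an odd number of negative letters on `K`. -/
noncomputable def negCore (V : Finset (Word ι R)) (K : Finset ι) (p : ι → R → Bool)
    (v : Word ι R) : Finset (Word ι R) :=
  {u ∈ core V K p v | ¬ signProd K u = 1}

section Core

variable {V : Finset (Word ι R)} {K : Finset ι} {p : ι → R → Bool} {v x : Word ι R}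

lemma posCore_subset : posCore V K p v ⊆ core V K p v := filter_subset _ _

lemma negCore_subset : negCore V K p v ⊆ core V K p v := filter_subset _ _

lemma signProd_of_mem_posCore (hx : x ∈ posCore V K p v) : signProd K x = 1 :=
  (mem_filter.1 hx).2

lemma signProd_of_mem_negCore (hx : x ∈ negCore V K p v) : signProd K x = -1 :=
  (signProd_eq_or K x).resolve_left (mem_filter.1 hx).2

lemma sum_core_eq_sum_posCore_add_sum_negCore (f : Word ι R → ℤ) :
    ∑ x ∈ core V K p v, f x = ∑ x ∈ posCore V K p v, f x + ∑ x ∈ negCore V K p v, f x :=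
  (Finset.sum_filter_add_sum_filter_not _ _ _).symm

lemma card_core_eq_add : #(core V K p v) = #(posCore V K p v) + #(negCore V K p v) :=
  (Finset.card_filter_add_card_filter_not _).symm

lemma sum_core_signProd_sdiff {M : Finset ι} (hM : M ⊆ K) :
    ∑ x ∈ core V K p v, signProd (K \ M) x =
      ∑ x ∈ posCore V K p v, signProd M x - ∑ x ∈ negCore V K p v, signProd M x := by
  rw [sum_core_eq_sum_posCore_add_sum_negCore, sub_eq_add_neg, ← Finset.sum_neg_distrib]
  congr 1 <;> refine Finset.sum_congr rfl fun x hx => ?_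
  · rw [signProd_sdiff hM, signProd_of_mem_posCore hx, one_mul]
  · rw [signProd_sdiff hM, signProd_of_mem_negCore hx, neg_one_mul]

lemma baseDiff_of_mem_core (hx : x ∈ core V K p v) : baseDiff K v x = ∅ :=
  baseDiff_eq_empty.2 (mem_slice.1 hx).2.1

end Core

namespace ExtremalPair

variable {V W : Finset (Word ι R)} {K : Finset ι} {p : ι → R → Bool} {v w x y : Word ι R}

lemma symm (s : ExtremalPair V W K p v w) : ExtremalPair W V K p w v where
  rival := s.rival.symm
  left_mem := s.right_mem
  right_mem := s.left_mem
  fst_ne i hi := (s.fst_ne i hi).symm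
  eq_off i hi := (s.eq_off i hi).symm
  fits_left := s.fits_right
  fits_right := s.fits_left
  maximal x hx y hy h := by
    simpa only [ne_comm] using s.maximal y hy x hx fun i hi => h i (eq_opp_comm.1 hi)

lemma left_ne_right (s : ExtremalPair V W K p v w) : v ≠ w :=
  s.rival.disjoint.forall_ne_finset s.left_mem s.right_mem

lemma nonempty (s : ExtremalPair V W K p v w) : K.Nonempty := by
  rw [Finset.nonempty_iff_ne_empty]
  rintro rfl
  exact s.left_ne_right (funext fun i => s.eq_off i (notMem_empty i))

lemma eq_left_off [Finite ι] (s : ExtremalPair V W K p v w) (hx : x ∈ V)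
    (hfits : ∀ i ∉ K, Fits (p i) (x i)) (hbase : ∀ i ∈ K, (x i).1 ≠ (w i).1) :
    ∀ i ∉ K, x i = v i := by
  have hle : {i | x i ≠ w i}.ncard ≤ #K := s.maximal x hx w s.right_mem fun i => by
    by_cases hi : i ∈ K
    · exact fun h => hbase i hi (by rw [h, opp_fst])
    · exact (hfits i hi).ne_opp (s.fits_right i)
  have hsub : (K : Set ι) ⊆ {i | x i ≠ w i} := fun i hi h => hbase i hi (by rw [h])
  have heq := Set.eq_of_subset_of_ncard_le hsub (by rwa [Set.ncard_coe_finset])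
  intro i hi
  have hxw : ¬ x i ≠ w i := fun h => hi (by simpa using heq.symm.subset h)
  rw [not_not.1 hxw, s.eq_off i hi]

lemma eq_left_of_forall_ne_opp (s : ExtremalPair V W K p v w) (hx : x ∈ V)
    (hfits : ∀ i ∉ K, Fits (p i) (x i)) (hopp : ∀ i ∈ K, x i ≠ opp (v i)) : x = v := by
  by_contra hne
  obtain ⟨i, hi⟩ := s.rival.left.exists_eq_opp x hx v s.left_mem hne
  by_cases hiK : i ∈ K
  · exact hopp i hiK hi
  · exact (hfits i hiK).ne_opp (s.fits_left i) hi

lemma exists_fst_ne_of_mem_right (s : ExtremalPair V W K p v w) (hx : x ∈ W)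
    (hfits : ∀ i ∉ K, Fits (p i) (x i)) : ∃ i ∈ K, (x i).1 ≠ (v i).1 := by
  by_contra! hbase
  have hxw : x = w := s.symm.eq_left_of_forall_ne_opp hx hfits fun i hi h =>
    s.fst_ne i hi (by rw [← hbase i hi, h, opp_fst])
  obtain ⟨i, hi⟩ := s.nonempty
  exact s.fst_ne i hi (by rw [← hbase i hi, hxw])

lemma slice_union_eq_core (s : ExtremalPair V W K p v w) :
    slice (V ∪ W) K K p v = core V K p v := by
  ext u
  simp only [mem_slice, mem_union]
  refine ⟨fun ⟨hu, hbase, hfits⟩ => ⟨hu.resolve_right fun hW => ?_, hbase, hfits⟩,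
    fun ⟨hu, h⟩ => ⟨.inl hu, h⟩⟩
  obtain ⟨i, hi, hne⟩ := s.exists_fst_ne_of_mem_right hW hfits
  exact hne (hbase i hi)

lemma left_mem_core (s : ExtremalPair V W K p v w) : v ∈ core V K p v :=
  mem_slice.2 ⟨s.left_mem, fun _ _ => rfl, fun i _ => s.fits_left i⟩

-- Flipping the letter selected at `j` keeps `w` selected, but replaces `v` by another word of `V`.
lemma exists_eq_opp_and_fits_ne (s : ExtremalPair V W K p v w) {j : ι} (hj : j ∈ K) :
    ∃ u ∈ V, u j = opp (v j) ∧ ∀ i ≠ j, Fits (p i) (u i) := by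
  have hw : FitsWord (setLetter p j (opp (v j))) w := fun i => by
    rcases eq_or_ne i j with rfl | hij
    · exact (fits_setLetter_iff_of_fst_ne (a := opp (v i)) (s.fst_ne i hj).symm).2 (s.fits_right i)
    · rw [setLetter_of_ne p hij]
      exact s.fits_right i
  obtain ⟨u, hu, hfits⟩ := s.rival.exists_left_of_right s.right_mem hw
  have hoff (i : ι) (hij : i ≠ j) : Fits (p i) (u i) := by
    simpa only [setLetter_of_ne p hij] using hfits i
  have huv : u ≠ v := by
    rintro rfl
    exact (hfits j).ne_opp (fits_setLetter_self p j _) (opp_opp _).symm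
  obtain ⟨i, hi⟩ := s.rival.left.exists_eq_opp u hu v s.left_mem huv
  obtain rfl : i = j := by
    by_contra hij
    exact (hoff i hij).ne_opp (s.fits_left i) hi
  exact ⟨u, hu, hi, hoff⟩

lemma card_core_add_sum_devWithin_le (s : ExtremalPair V W K p v w) {F : Finset (Finset ι)} {r : ℕ}
    (hcard : ∀ M ∈ F, #M ≤ r) (hdisj : (F : Set (Finset ι)).PairwiseDisjoint id) :
    #(core V K p v) + ∑ M ∈ F, #(devWithin (V ∪ W) K v M) ≤ #(baseBall (V ∪ W) K v r) := by
  have hdev : (F : Set (Finset ι)).PairwiseDisjoint (devWithin (V ∪ W) K v) :=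
    fun M hM N hN hne => disjoint_devWithin (hdisj hM hN hne)
  have hcore : Disjoint (core V K p v) (F.biUnion (devWithin (V ∪ W) K v)) := by
    rw [Finset.disjoint_left]
    intro u hu hF
    obtain ⟨M, -, hM⟩ := mem_biUnion.1 hF
    exact (mem_devWithin.1 hM).2.2.ne_empty (baseDiff_of_mem_core hu)
  rw [← card_biUnion hdev, ← card_union_of_disjoint hcore]
  refine card_le_card (union_subset (fun u hu => ?_) (biUnion_subset.2 fun M hM u hu => ?_))
  · rw [← s.slice_union_eq_core] at hu
    exact mem_filter.2 ⟨slice_subset hu, by simp [baseDiff_of_mem_core hu]⟩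
  · obtain ⟨hU, hsub, -⟩ := mem_devWithin.1 hu
    exact mem_filter.2 ⟨hU, (card_le_card hsub).trans (hcard M hM)⟩

lemma card_core_add_sum_devWithin_singleton_le (s : ExtremalPair V W K p v w) (D : Finset ι) :
    #(core V K p v) + ∑ i ∈ D, #(devWithin (V ∪ W) K v {i}) ≤ #(baseBall (V ∪ W) K v 1) := by
  have hle := s.card_core_add_sum_devWithin_le (F := D.image fun i => {i}) (r := 1) (by simp)
    (by
      simp only [Set.PairwiseDisjoint, Set.Pairwise, coe_image, Set.forall_mem_image]
      exact fun i _ j _ hne => disjoint_singleton.2 fun h => hne (h ▸ rfl))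
  rwa [Finset.sum_image (by simp)] at hle

variable [Finite ι]

lemma eq_left_off_of_mem_core (s : ExtremalPair V W K p v w) (hx : x ∈ core V K p v) :
    ∀ i ∉ K, x i = v i := by
  obtain ⟨hV, hbase, hfits⟩ := mem_slice.1 hx
  exact s.eq_left_off hV hfits fun i hi => by rw [hbase i hi]; exact s.fst_ne i hi

lemma fst_eq_of_mem_core (s : ExtremalPair V W K p v w) (hx : x ∈ core V K p v) (i : ι) :
    (x i).1 = (v i).1 := by
  by_cases hi : i ∈ K
  · exact (mem_slice.1 hx).2.1 i hi
  · rw [s.eq_left_off_of_mem_core hx i hi]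

lemma abs_sum_posCore_sub_sum_negCore_le (s : ExtremalPair V W K p v w) {M : Finset ι}
    (hM : M ⊆ K) :
    |∑ x ∈ posCore V K p v, signProd M x - ∑ x ∈ negCore V K p v, signProd M x| ≤
      #(devWithin (V ∪ W) K v M) := by
  have hle := s.rival.abs_sum_slice_le (K := K) (M := M) p v
  rw [s.slice_union_eq_core, Finset.sum_congr rfl fun x hx => by
    rw [sideSign_of_mem (slice_subset hx), one_mul], sum_core_signProd_sdiff hM,
    ← s.slice_union_eq_core] at hle
  exact hle.trans (mod_cast card_le_card slice_sdiff_slice_subset_devWithin)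

lemma card_posCore_eq_card_negCore (s : ExtremalPair V W K p v w) :
    #(posCore V K p v) = #(negCore V K p v) := by
  have hle := s.abs_sum_posCore_sub_sum_negCore_le (empty_subset K)
  simp only [signProd, prod_empty, sum_const, devWithin_empty, card_empty] at hle
  simp only [mul_one, Nat.cast_zero, nsmul_eq_mul, abs_nonpos_iff] at hle
  omega

lemma card_posCore_pos (s : ExtremalPair V W K p v w) : 0 < #(posCore V K p v) := by
  have hpos : 0 < #(core V K p v) := card_pos.2 ⟨v, s.left_mem_core⟩
  have := card_core_eq_add (V := V) (K := K) (p := p) (v := v)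
  have := s.card_posCore_eq_card_negCore
  omega

lemma three_le_card_signDiff (s : ExtremalPair V W K p v w) (hx : x ∈ core V K p v)
    (hy : y ∈ core V K p v) (h : signProd K x ≠ signProd K y) : 3 ≤ #(signDiff K x y) := by
  have hodd := odd_card_signDiff h
  by_contra hlt
  obtain ⟨i, hi⟩ := card_eq_one.1 (show #(signDiff K x y) = 1 by obtain ⟨k, hk⟩ := hodd; lia)
  have hfst (j : ι) : (x j).1 = (y j).1 := by
    rw [s.fst_eq_of_mem_core hx, s.fst_eq_of_mem_core hy]
  have hmem : i ∈ signDiff K x y := by simp [hi]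
  obtain ⟨j, hji, hne⟩ := s.rival.left.exists_ne x (slice_subset hx) y (slice_subset hy) i
    (eq_opp_of_fst_eq_of_snd_ne (hfst i) (mem_signDiff.1 hmem).2)
  refine hne ?_
  by_cases hjK : j ∈ K
  · refine Prod.ext (hfst j) (not_not.1 fun hsnd => hji ?_)
    simpa [hi] using mem_signDiff.2 ⟨hjK, hsnd⟩
  · rw [s.eq_left_off_of_mem_core hx j hjK, s.eq_left_off_of_mem_core hy j hjK]

lemma three_le_card_signDiff_of_posCore_of_negCore (s : ExtremalPair V W K p v w)
    (hx : x ∈ posCore V K p v) (hy : y ∈ negCore V K p v) : 3 ≤ #(signDiff K x y) :=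
  s.three_le_card_signDiff (posCore_subset hx) (negCore_subset hy) <| by
    rw [signProd_of_mem_posCore hx, signProd_of_mem_negCore hy]; decide

lemma card_core_add_card_le (s : ExtremalPair V W K p v w) : #(core V K p v) + #K ≤ #V := by
  have : Nonempty (Word ι R) := ⟨v⟩
  choose! g hgV hgopp hgfits using fun j (hj : j ∈ K) => s.exists_eq_opp_and_fits_ne hj
  have hinj : Set.InjOn g K := fun j hj k hk hjk => by
    by_contra hne
    exact (hgfits k hk j hne).ne_opp (s.fits_left j) (hjk ▸ hgopp j hj)
  have hdisj : Disjoint (core V K p v) (K.image g) := by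
    rw [Finset.disjoint_right]
    intro u hu hcore
    obtain ⟨j, hj, rfl⟩ := mem_image.1 hu
    obtain ⟨k, hk, hne⟩ := s.rival.left.exists_ne _ (hgV j hj) v s.left_mem j (hgopp j hj)
    exact hne ((hgfits j hj k hk).eq_of_fst_eq (s.fits_left k) (s.fst_eq_of_mem_core hcore k))
  calc #(core V K p v) + #K = #(core V K p v ∪ K.image g) := by
        rw [card_union_of_disjoint hdisj, card_image_of_injOn hinj]
    _ ≤ #V := card_le_card <| union_subset slice_subset <| image_subset_iff.2 hgV

end ExtremalPair

/-! ### Cores with six words -/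

/-- The sum of the signs in coordinate `i` of the words of `X`. -/
def signSum (X : Finset (Word ι R)) (i : ι) : ℤ := ∑ x ∈ X, boolSign (x i).2

lemma abs_signSum_le (X : Finset (Word ι R)) (i : ι) : |signSum X i| ≤ #X :=
  abs_sum_le_card_of_unit fun x _ => boolSign_eq_or (x i).2

lemma even_signSum_add_card (X : Finset (Word ι R)) (i : ι) : Even (signSum X i + #X) :=
  even_sum_add_card_of_unit fun x _ => boolSign_eq_or (x i).2

lemma sum_signSum_mul_signSum (K : Finset ι) (X Y : Finset (Word ι R)) :
    ∑ i ∈ K, signSum X i * signSum Y i = ∑ x ∈ X, ∑ y ∈ Y, ((#K : ℤ) - 2 * #(signDiff K x y)) := by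
  simp only [signSum, Finset.sum_mul_sum]
  rw [Finset.sum_comm]
  refine Finset.sum_congr rfl fun x _ => ?_
  rw [Finset.sum_comm]
  exact Finset.sum_congr rfl fun y _ => sum_boolSign_mul_boolSign K x y

lemma three_sub_three_mul_le_five_mul_abs_sub {a b : ℤ} (ha : |a| ≤ 3) (hb : |b| ≤ 3)
    (ha' : Even (a + 3)) (hb' : Even (b + 3)) : 3 - 3 * (a * b) ≤ 5 * |a - b| := by
  obtain ⟨ha₁, ha₂⟩ := abs_le.1 ha
  obtain ⟨hb₁, hb₂⟩ := abs_le.1 hb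
  rw [Int.even_iff] at ha' hb'
  interval_cases a <;> interval_cases b <;> simp_all

namespace ExtremalPair

variable [Finite ι] {V W : Finset (Word ι R)} {K : Finset ι} {p : ι → R → Bool}
  {v w : Word ι R}

lemma abs_signSum_posCore_sub_signSum_negCore_le (s : ExtremalPair V W K p v w) {i : ι}
    (hi : i ∈ K) : |signSum (posCore V K p v) i - signSum (negCore V K p v) i| ≤
      #(devWithin (V ∪ W) K v {i}) := by
  simpa only [signProd_singleton, signSum] using
    s.abs_sum_posCore_sub_sum_negCore_le (singleton_subset_iff.2 hi)

lemma sum_signSum_posCore_mul_signSum_negCore_le (s : ExtremalPair V W K p v w) :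
    ∑ i ∈ K, signSum (posCore V K p v) i * signSum (negCore V K p v) i ≤
      #(posCore V K p v) * #(negCore V K p v) * ((#K : ℤ) - 6) := by
  rw [sum_signSum_mul_signSum]
  calc _ ≤ ∑ x ∈ posCore V K p v, ∑ y ∈ negCore V K p v, ((#K : ℤ) - 6) :=
        Finset.sum_le_sum fun x hx => Finset.sum_le_sum fun y hy => by
          have := s.three_le_card_signDiff_of_posCore_of_negCore hx hy
          lia
    _ = _ := by simp only [Finset.sum_const, nsmul_eq_mul, mul_assoc]

lemma twelve_le_card_baseBall_one_of_card_posCore_eq_three (s : ExtremalPair V W K p v w)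
    (h : #(posCore V K p v) = 3) (hK : #K ≤ 5) : 12 ≤ #(baseBall (V ∪ W) K v 1) := by
  have hneg : #(negCore V K p v) = 3 := s.card_posCore_eq_card_negCore ▸ h
  have hpoint (i : ι) (hi : i ∈ K) :
      3 - 3 * (signSum (posCore V K p v) i * signSum (negCore V K p v) i) ≤
        5 * (#(devWithin (V ∪ W) K v {i}) : ℤ) := by
    have hbound := s.abs_signSum_posCore_sub_signSum_negCore_le hi
    have harith := three_sub_three_mul_le_five_mul_abs_sub
      (by simpa [h] using abs_signSum_le (posCore V K p v) i)
      (by simpa [hneg] using abs_signSum_le (negCore V K p v) i)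
      (by simpa [h] using even_signSum_add_card (posCore V K p v) i)
      (by simpa [hneg] using even_signSum_add_card (negCore V K p v) i)
    lia
  have hsum := Finset.sum_le_sum hpoint
  rw [Finset.sum_sub_distrib, ← Finset.mul_sum, ← Finset.mul_sum, Finset.sum_const,
    nsmul_eq_mul] at hsum
  have hprod := s.sum_signSum_posCore_mul_signSum_negCore_le
  have hball := s.card_core_add_sum_devWithin_singleton_le K
  have hcore := card_core_eq_add (V := V) (K := K) (p := p) (v := v)
  rw [h, hneg] at hprod hcore
  zify at hball hcore ⊢
  lia

end ExtremalPair

/-! ### Cores with four words -/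

/-- For pairs of words `a, b` and `c, d`, the coordinates in `K` at which the signs of `a` and `d`
agree, those of `b` and `c` agree, and those of `a` and `c` differ. -/
def crossing (K : Finset ι) (a b c d : Word ι R) : Finset ι :=
  {i ∈ K | (a i).2 = (d i).2 ∧ (b i).2 = (c i).2 ∧ (a i).2 ≠ (c i).2}

lemma mem_crossing {K : Finset ι} {a b c d : Word ι R} {i : ι} : i ∈ crossing K a b c d ↔
    i ∈ K ∧ (a i).2 = (d i).2 ∧ (b i).2 = (c i).2 ∧ (a i).2 ≠ (c i).2 := by
  simp [crossing]

lemma disjoint_crossing_crossing_swap {K : Finset ι} {a b c d : Word ι R} :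
    Disjoint (crossing K a b d c) (crossing K a b c d) := by
  rw [Finset.disjoint_left]
  intro i hi hi'
  exact (mem_crossing.1 hi').2.2.2 (mem_crossing.1 hi).2.1

lemma two_mul_ite_add_le_abs_add_four_mul_ite (a b c d : Bool) :
    2 * (if a ≠ c then (1 : ℤ) else 0) + 2 * (if b ≠ d then 1 else 0) ≤
      |(boolSign a + boolSign b) - (boolSign c + boolSign d)| +
        4 * if a = d ∧ b = c ∧ a ≠ c then 1 else 0 := by
  cases a <;> cases b <;> cases c <;> cases d <;> simp [boolSign]

namespace ExtremalPair

variable [Finite ι] {V W : Finset (Word ι R)} {K : Finset ι} {p : ι → R → Bool}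
  {v w a b c d : Word ι R}

lemma two_mul_card_signDiff_add_le (s : ExtremalPair V W K p v w)
    (hab : a ≠ b) (hcd : c ≠ d) (hpos : posCore V K p v = {a, b})
    (hneg : negCore V K p v = {c, d}) :
    2 * #(signDiff K a c) + 2 * #(signDiff K b d) ≤
      ∑ i ∈ K, #(devWithin (V ∪ W) K v {i}) + 4 * #(crossing K a b c d) := by
  have hpoint (i : ι) (hi : i ∈ K) :
      2 * (if (a i).2 ≠ (c i).2 then (1 : ℤ) else 0) +
        2 * (if (b i).2 ≠ (d i).2 then 1 else 0) ≤
      #(devWithin (V ∪ W) K v {i}) +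
        4 * if (a i).2 = (d i).2 ∧ (b i).2 = (c i).2 ∧ (a i).2 ≠ (c i).2 then 1 else 0 := by
    have hbound := s.abs_signSum_posCore_sub_signSum_negCore_le hi
    rw [hpos, hneg, signSum, signSum, sum_pair hab, sum_pair hcd] at hbound
    grw [two_mul_ite_add_le_abs_add_four_mul_ite, hbound]
  have hsum := Finset.sum_le_sum hpoint
  simp only [Finset.sum_add_distrib, ← Finset.mul_sum, Finset.sum_boole] at hsum
  simp only [signDiff, crossing]
  exact_mod_cast hsum

lemma twelve_le_card_baseBall_one_or_two_le_card_crossing (s : ExtremalPair V W K p v w)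
    (hab : a ≠ b) (hcd : c ≠ d) (hpos : posCore V K p v = {a, b})
    (hneg : negCore V K p v = {c, d}) :
    12 ≤ #(baseBall (V ∪ W) K v 1) ∨ 2 ≤ #(crossing K a b c d) := by
  have hac := s.three_le_card_signDiff_of_posCore_of_negCore (x := a) (y := c)
    (by simp [hpos]) (by simp [hneg])
  have hbd := s.three_le_card_signDiff_of_posCore_of_negCore (x := b) (y := d)
    (by simp [hpos]) (by simp [hneg])
  have hdev := s.two_mul_card_signDiff_add_le hab hcd hpos hneg
  have hball := s.card_core_add_sum_devWithin_singleton_le K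
  have hcore := card_core_eq_add (V := V) (K := K) (p := p) (v := v)
  rw [hpos, hneg, card_pair hab, card_pair hcd] at hcore
  lia

lemma four_le_card_devWithin_of_mem_crossing (s : ExtremalPair V W K p v w)
    (hab : a ≠ b) (hcd : c ≠ d) (hpos : posCore V K p v = {a, b})
    (hneg : negCore V K p v = {c, d}) {i j : ι} (hi : i ∈ crossing K a b d c)
    (hj : j ∈ crossing K a b c d) : 4 ≤ #(devWithin (V ∪ W) K v {i, j}) := by
  have hij : i ≠ j := disjoint_crossing_crossing_swap.forall_ne_finset hi hj
  obtain ⟨hiK, hac, hbd, had⟩ := mem_crossing.1 hi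
  obtain ⟨hjK, had', hbc', hac'⟩ := mem_crossing.1 hj
  have hbound := s.abs_sum_posCore_sub_sum_negCore_le
    (insert_subset hiK (singleton_subset_iff.2 hjK))
  have habs : |signProd {i, j} a + signProd {i, j} b - (signProd {i, j} c + signProd {i, j} d)| =
      4 := by
    simp only [signProd, prod_pair hij, hac, hbd, had', hbc']
    rw [hac] at had
    rw [had'] at hac'
    revert had hac'
    generalize (c i).2 = ci, (d i).2 = di, (c j).2 = cj, (d j).2 = dj
    cases ci <;> cases di <;> cases cj <;> cases dj <;> simp [boolSign]
  rw [hpos, hneg, sum_pair hab, sum_pair hcd, habs] at hbound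
  exact_mod_cast hbound

lemma twelve_le_card_baseBall_two_of_two_le_card_crossing (s : ExtremalPair V W K p v w)
    (hab : a ≠ b) (hcd : c ≠ d) (hpos : posCore V K p v = {a, b})
    (hneg : negCore V K p v = {c, d}) (h : 2 ≤ #(crossing K a b d c))
    (h' : 2 ≤ #(crossing K a b c d)) : 12 ≤ #(baseBall (V ∪ W) K v 2) := by
  obtain ⟨i, hi, j, hj, hij⟩ := one_lt_card.1 h
  obtain ⟨k, hk, l, hl, hkl⟩ := one_lt_card.1 h'
  have hdisj : Disjoint ({i, k} : Finset ι) {j, l} := by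
    have hil : i ≠ l := disjoint_crossing_crossing_swap.forall_ne_finset hi hl
    have hjk : j ≠ k := disjoint_crossing_crossing_swap.forall_ne_finset hj hk
    simp [hij.symm, hkl.symm, hil.symm, hjk]
  have hne : ({i, k} : Finset ι) ≠ {j, l} := hdisj.ne (insert_ne_empty _ _)
  have hball := s.card_core_add_sum_devWithin_le (F := {{i, k}, {j, l}}) (r := 2)
    (by simp [card_le_two])
    (by rw [coe_pair]; exact Set.pairwise_pair.2 fun _ => ⟨hdisj, hdisj.symm⟩)
  rw [sum_pair hne] at hball
  have hik := s.four_le_card_devWithin_of_mem_crossing hab hcd hpos hneg hi hk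
  have hjl := s.four_le_card_devWithin_of_mem_crossing hab hcd hpos hneg hj hl
  have hcore := card_core_eq_add (V := V) (K := K) (p := p) (v := v)
  rw [hpos, hneg, card_pair hab, card_pair hcd] at hcore
  lia

lemma five_le_card_of_two_le_card_crossing (s : ExtremalPair V W K p v w)
    (ha : a ∈ posCore V K p v) (hc : c ∈ negCore V K p v) (h : 2 ≤ #(crossing K a b d c)) :
    5 ≤ #K := by
  have hdisj : Disjoint (signDiff K a c) (crossing K a b d c) := by
    rw [Finset.disjoint_left]
    intro i hi hi'
    exact (mem_signDiff.1 hi).2 (mem_crossing.1 hi').2.1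
  have hsub : signDiff K a c ∪ crossing K a b d c ⊆ K :=
    union_subset (filter_subset _ _) (filter_subset _ _)
  have hle := card_le_card hsub
  rw [card_union_of_disjoint hdisj] at hle
  have := s.three_le_card_signDiff_of_posCore_of_negCore ha hc
  lia

lemma twelve_le_card_baseBall_of_card_posCore_eq_two (s : ExtremalPair V W K p v w)
    (h : #(posCore V K p v) = 2) : 12 ≤ #(baseBall (V ∪ W) K v 1) ∨
      12 ≤ #(baseBall (V ∪ W) K v 2) ∧ 5 ≤ #K := by
  obtain ⟨a, b, hab, hpos⟩ := card_eq_two.1 h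
  obtain ⟨c, d, hcd, hneg⟩ := card_eq_two.1 (s.card_posCore_eq_card_negCore ▸ h)
  have hneg' : negCore V K p v = {d, c} := hneg.trans (pair_comm c d)
  rcases s.twelve_le_card_baseBall_one_or_two_le_card_crossing hab hcd hpos hneg with h₁ | h₁
  · exact .inl h₁
  rcases s.twelve_le_card_baseBall_one_or_two_le_card_crossing hab hcd.symm hpos hneg' with h₂ | h₂
  · exact .inl h₂
  exact .inr ⟨s.twelve_le_card_baseBall_two_of_two_le_card_crossing hab hcd hpos hneg h₂ h₁,
    s.five_le_card_of_two_le_card_crossing (by simp [hpos]) (by simp [hneg]) h₂⟩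

end ExtremalPair

/-! ### Words deviating in one coordinate -/

/-- The words of `U` whose bases deviate from those of `v` in exactly one coordinate of `K`, namely
`i`, and that fit `p` outside `K`. -/
noncomputable def localDev (U : Finset (Word ι R)) (K : Finset ι) (p : ι → R → Bool)
    (v : Word ι R) (i : ι) : Finset (Word ι R) :=
  {u ∈ U | baseDiff K v u = {i} ∧ ∀ j ∉ K, Fits (p j) (u j)}

/-- The words of `U` whose bases deviate from those of `v` exactly at the coordinates `A` of `K`. -/
noncomputable def devOn (U : Finset (Word ι R)) (K : Finset ι) (v : Word ι R) (A : Finset ι) :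
    Finset (Word ι R) :=
  {u ∈ U | baseDiff K v u = A}

lemma exists_eq_pair_of_mem_of_card_eq_two {α : Type*} {s : Finset α} {a : α} (ha : a ∈ s)
    (h : #s = 2) : ∃ b, a ≠ b ∧ s = {a, b} := by
  obtain ⟨x, y, hxy, rfl⟩ := card_eq_two.1 h
  rcases mem_insert.1 ha with rfl | ha
  · exact ⟨y, hxy, rfl⟩
  · obtain rfl := mem_singleton.1 ha
    exact ⟨x, hxy.symm, pair_comm _ _⟩

section Deviation

variable {U : Finset (Word ι R)} {K S A B : Finset ι} {p : ι → R → Bool} {u v z : Word ι R}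
  {i a : ι}

lemma mem_localDev : u ∈ localDev U K p v i ↔
    u ∈ U ∧ baseDiff K v u = {i} ∧ ∀ j ∉ K, Fits (p j) (u j) := by
  simp [localDev]

lemma mem_devOn : u ∈ devOn U K v A ↔ u ∈ U ∧ baseDiff K v u = A := by
  simp [devOn]

lemma disjoint_devOn (h : A ≠ B) : Disjoint (devOn U K v A) (devOn U K v B) := by
  rw [Finset.disjoint_left]
  exact fun u hA hB => h ((mem_devOn.1 hA).2.symm.trans (mem_devOn.1 hB).2)

lemma baseDiff_congr (h : ∀ j ∈ K, (u j).1 = (z j).1) : baseDiff K v u = baseDiff K v z :=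
  filter_congr fun j hj => by rw [h j hj]

lemma fst_eq_of_mem_localDev (hz : z ∈ localDev U K p v i) (ha : a ∈ K) (hai : a ≠ i) :
    (z a).1 = (v a).1 := by
  by_contra hne
  have hmem : a ∈ baseDiff K v z := mem_baseDiff.2 ⟨ha, hne⟩
  rw [(mem_localDev.1 hz).2.1] at hmem
  exact hai (mem_singleton.1 hmem)

lemma self_mem_slice_of_mem_localDev (hz : z ∈ localDev U K p v i) : z ∈ slice U K K p z :=
  mem_slice.2 ⟨(mem_localDev.1 hz).1, fun _ _ => rfl, (mem_localDev.1 hz).2.2⟩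

lemma slice_subset_devWithin_of_mem_localDev (hz : z ∈ localDev U K p v i) :
    slice U K K p z ⊆ devWithin U K v {i} := by
  intro u hu
  obtain ⟨hU, hbase, -⟩ := mem_slice.1 hu
  rw [mem_devWithin, baseDiff_congr hbase, (mem_localDev.1 hz).2.1]
  exact ⟨hU, Subset.rfl, singleton_nonempty i⟩

lemma baseDiff_eq_insert_of_mem_slice_sdiff_slice (ha : a ∈ K) (hza : (z a).1 = (v a).1)
    (hu : u ∈ slice U (K \ {a}) K p z \ slice U K K p z) :
    baseDiff K v u = insert a (baseDiff K v z) := by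
  obtain ⟨hu, hnot⟩ := mem_sdiff.1 hu
  obtain ⟨hU, hbase, hfits⟩ := mem_slice.1 hu
  have hoff (j : ι) (hj : j ∈ K) (hja : j ≠ a) : (u j).1 = (z j).1 :=
    hbase j (by simp [hj, hja])
  have hua : (u a).1 ≠ (z a).1 := fun h => hnot <| mem_slice.2 ⟨hU, fun j hj => by
    rcases eq_or_ne j a with rfl | hja
    exacts [h, hoff j hj hja], hfits⟩
  ext j
  rcases eq_or_ne j a with rfl | hja
  · simp [mem_baseDiff, ha, ← hza, hua]
  · rw [mem_insert, or_iff_right hja, mem_baseDiff, mem_baseDiff]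
    exact and_congr_right fun hj => by rw [hoff j hj hja]

lemma slice_sdiff_slice_subset_localDev (hi : i ∈ K) :
    slice U (K \ {i}) K p v \ slice U K K p v ⊆ localDev U K p v i := by
  intro u hu
  obtain ⟨hU, -, hfits⟩ := mem_slice.1 (mem_sdiff.1 hu).1
  have hdiff := baseDiff_eq_insert_of_mem_slice_sdiff_slice (v := v) hi rfl hu
  rw [baseDiff_eq_empty.2 fun _ _ => rfl] at hdiff
  exact mem_localDev.2 ⟨hU, hdiff, hfits⟩

lemma slice_sdiff_slice_subset_devOn (hz : z ∈ localDev U K p v i) (ha : a ∈ K) (hai : a ≠ i) :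
    slice U (K \ {a}) K p z \ slice U K K p z ⊆ devOn U K v {a, i} := by
  intro u hu
  have hdiff := baseDiff_eq_insert_of_mem_slice_sdiff_slice ha
    (fst_eq_of_mem_localDev hz ha hai) hu
  rw [(mem_localDev.1 hz).2.1] at hdiff
  exact mem_devOn.2 ⟨slice_subset (mem_sdiff.1 hu).1, hdiff⟩

end Deviation

namespace RivalCodes

variable {V W : Finset (Word ι R)} {K S : Finset ι} {p : ι → R → Bool} {v y z z' : Word ι R}
  {i a : ι}

-- Equal bases would make `z` and `z'` twins in the same code.
lemma exists_fst_ne (h : RivalCodes V W) (hz : z ∈ V ∪ W) (hz' : z' ∈ V ∪ W) (hne : z ≠ z')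
    (hfits : ∀ j ∉ K, Fits (p j) (z j)) (hfits' : ∀ j ∉ K, Fits (p j) (z' j))
    (hweight : sideSign V z' * signProd K z' = -(sideSign V z * signProd K z))
    (hdiff : ∀ a ∈ signDiff K z z', a = i) : ∃ q, (z q).1 ≠ (z' q).1 := by
  by_contra! hfst
  have hmem (j : ι) (hj : z j ≠ z' j) : j ∈ signDiff K z z' := by
    refine mem_signDiff.2 ⟨?_, fun hsnd => hj (Prod.ext (hfst j) hsnd)⟩
    by_contra hjK
    exact hj ((hfits j hjK).eq_of_fst_eq (hfits' j hjK) (hfst j))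
  obtain ⟨j, hj⟩ := Function.ne_iff.1 hne
  obtain rfl : j = i := hdiff j (hmem j hj)
  have hsingle : signDiff K z z' = {j} :=
    eq_singleton_iff_unique_mem.2 ⟨hmem j hj, hdiff⟩
  have hsign := signProd_mul_signProd K z z'
  rw [hsingle, card_singleton, pow_one] at hsign
  have hcode {C : Finset (Word ι R)} (hC : IsTwinFreeCode C) (hz : z ∈ C) (hz' : z' ∈ C) :
      False := by
    obtain ⟨k, hkj, hk⟩ := hC.exists_ne z hz z' hz' j
      ((eq_or_eq_opp_of_fst_eq (hfst j)).resolve_left hj)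
    exact hkj (hdiff k (hmem k hk))
  rcases mem_union.1 hz with hz | hz <;> rcases mem_union.1 hz' with hz' | hz'
  · exact hcode h.left hz hz'
  · rw [sideSign_of_mem hz, h.sideSign_right hz'] at hweight
    rcases signProd_eq_or K z with h₁ | h₁ <;> simp_all
  · rw [h.sideSign_right hz, sideSign_of_mem hz'] at hweight
    rcases signProd_eq_or K z with h₁ | h₁ <;> simp_all
  · exact hcode h.right hz hz'

variable [Finite ι]

lemma two_le_card_slice (h : RivalCodes V W) (hS : S ⊆ K) (hz : z ∈ slice (V ∪ W) S K p v) :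
    2 ≤ #(slice (V ∪ W) S K p v) := by
  obtain ⟨k, hk⟩ := h.even_card_slice hS p v
  have := card_pos.2 ⟨z, hz⟩
  lia

lemma four_le_card_slice_union (h : RivalCodes V W) (hS : S ⊆ K)
    (hy : y ∈ slice (V ∪ W) S K p y) (hz : z ∈ slice (V ∪ W) S K p z) (hi : i ∈ S)
    (hne : (y i).1 ≠ (z i).1) : 4 ≤ #(slice (V ∪ W) S K p y ∪ slice (V ∪ W) S K p z) := by
  have hdisj : Disjoint (slice (V ∪ W) S K p y) (slice (V ∪ W) S K p z) := by
    rw [Finset.disjoint_left]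
    exact fun u hu hu' => hne <|
      ((mem_slice.1 hu).2.1 i hi).symm.trans ((mem_slice.1 hu').2.1 i hi)
  rw [card_union_of_disjoint hdisj]
  have := h.two_le_card_slice hS hy
  have := h.two_le_card_slice hS hz
  lia

lemma sideSign_mul_signProd_eq_neg (h : RivalCodes V W)
    (hpair : slice (V ∪ W) K K p z = {z, z'}) (hne : z ≠ z') :
    sideSign V z' * signProd K z' = -(sideSign V z * signProd K z) := by
  have hzero := h.sum_slice_eq_zero (Subset.refl K) p z
  rw [hpair, sum_pair hne] at hzero
  exact (neg_eq_of_add_eq_zero_right hzero).symm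

lemma two_le_card_slice_sdiff_slice (h : RivalCodes V W)
    (hpair : slice (V ∪ W) K K p z = {z, z'}) (hne : z ≠ z') (ha : a ∈ signDiff K z z') :
    2 ≤ #(slice (V ∪ W) (K \ {a}) K p z \ slice (V ∪ W) K K p z) := by
  obtain ⟨haK, hsign⟩ := mem_signDiff.1 ha
  have haK := singleton_subset_iff.2 haK
  have hle := h.abs_sum_slice_le (K := K) (M := {a}) p z
  have habs : |∑ u ∈ slice (V ∪ W) K K p z, sideSign V u * signProd (K \ {a}) u| = 2 := by
    rw [hpair, sum_pair hne, signProd_sdiff haK, signProd_sdiff haK, ← mul_assoc, ← mul_assoc,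
      h.sideSign_mul_signProd_eq_neg hpair hne, signProd_singleton, signProd_singleton]
    rcases sideSign_mul_signProd_eq_or V K z with hw | hw <;> rw [hw] <;>
      cases hz : (z a).2 <;> cases hz' : (z' a).2 <;> simp_all [boolSign]
  rw [habs] at hle
  exact_mod_cast hle

lemma exists_slice_eq_pair (h : RivalCodes V W) (hz : z ∈ localDev (V ∪ W) K p v i)
    (hdev : #(devWithin (V ∪ W) K v {i}) ≤ 3) :
    ∃ z', z ≠ z' ∧ slice (V ∪ W) K K p z = {z, z'} := by
  have hself := self_mem_slice_of_mem_localDev hz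
  have hcard : #(slice (V ∪ W) K K p z) = 2 := by
    obtain ⟨k, hk⟩ := h.even_card_slice (Subset.refl K) p z
    have := card_le_card (slice_subset_devWithin_of_mem_localDev hz)
    have := card_pos.2 ⟨z, hself⟩
    lia
  exact exists_eq_pair_of_mem_of_card_eq_two hself hcard

lemma exists_mem_signDiff_ne (h : RivalCodes V W) (hz : z ∈ localDev (V ∪ W) K p v i)
    (hpair : slice (V ∪ W) K K p z = {z, z'}) (hne : z ≠ z')
    (hdev : #(devWithin (V ∪ W) K v {i}) ≤ 3) : ∃ a ∈ signDiff K z z', a ≠ i := by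
  by_contra! hdiff
  have hz'mem : z' ∈ slice (V ∪ W) K K p z := by simp [hpair]
  obtain ⟨hz'U, hbase, hfits'⟩ := mem_slice.1 hz'mem
  obtain ⟨hzU, hbaseDiff, hfits⟩ := mem_localDev.1 hz
  obtain ⟨q, hq⟩ := h.exists_fst_ne hzU hz'U hne hfits hfits'
    (h.sideSign_mul_signProd_eq_neg hpair hne) hdiff
  have hself {x : Word ι R} (hx : x ∈ V ∪ W) (hfits : ∀ j ∉ K, Fits (p j) (x j)) :
      x ∈ slice (V ∪ W) (insert q K) (insert q K) p x :=
    mem_slice.2 ⟨hx, fun _ _ => rfl, fun j hj => hfits j fun hjK => hj (mem_insert_of_mem hjK)⟩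
  have hsub {x : Word ι R} (hx : ∀ j ∈ K, (x j).1 = (z j).1) :
      slice (V ∪ W) (insert q K) (insert q K) p x ⊆ devWithin (V ∪ W) K v {i} := fun u hu => by
    obtain ⟨hU, hux, -⟩ := mem_slice.1 hu
    rw [mem_devWithin, baseDiff_congr fun j hj => (hux j (mem_insert_of_mem hj)).trans (hx j hj),
      hbaseDiff]
    exact ⟨hU, Subset.rfl, singleton_nonempty i⟩
  have hfour := h.four_le_card_slice_union Subset.rfl (hself hzU hfits) (hself hz'U hfits')
    (mem_insert_self q K) hq
  have := card_le_card (union_subset (hsub fun _ _ => rfl) (hsub hbase))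
  lia

lemma two_le_card_devOn (h : RivalCodes V W) (hz : z ∈ localDev (V ∪ W) K p v i)
    (hpair : slice (V ∪ W) K K p z = {z, z'}) (hne : z ≠ z') (ha : a ∈ signDiff K z z')
    (hai : a ≠ i) : 2 ≤ #(devOn (V ∪ W) K v {a, i}) :=
  (h.two_le_card_slice_sdiff_slice hpair hne ha).trans <|
    card_le_card (slice_sdiff_slice_subset_devOn hz (mem_signDiff.1 ha).1 hai)

end RivalCodes

/-! ### Cores with two words -/

/-- The words of `U` whose bases deviate from those of `v` in exactly two coordinates of `K`. -/
noncomputable def baseSphere (U : Finset (Word ι R)) (K : Finset ι) (v : Word ι R) :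
    Finset (Word ι R) :=
  {u ∈ U | #(baseDiff K v u) = 2}

/-- The words of `U` whose bases deviate from those of `v` in exactly two coordinates of `K`, one of
which is `i`. -/
noncomputable def baseSphereAt (U : Finset (Word ι R)) (K : Finset ι) (v : Word ι R) (i : ι) :
    Finset (Word ι R) :=
  {u ∈ baseSphere U K v | i ∈ baseDiff K v u}

section Sphere

variable {U : Finset (Word ι R)} {K : Finset ι} {v : Word ι R} {i j k a b c : ι}

lemma devOn_pair_subset_baseSphereAt (h : a ≠ i) :
    devOn U K v {a, i} ⊆ baseSphereAt U K v i := by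
  intro u hu
  obtain ⟨hU, hdiff⟩ := mem_devOn.1 hu
  rw [baseSphereAt, mem_filter, baseSphere, mem_filter, hdiff, card_pair h]
  simp [hU]

lemma two_le_card_baseSphere (h : a ≠ i) (hdev : 2 ≤ #(devOn U K v {a, i})) :
    2 ≤ #(baseSphere U K v) :=
  hdev.trans <| card_le_card <| (devOn_pair_subset_baseSphereAt h).trans (filter_subset _ _)

lemma four_le_card_baseSphere (hai : a ≠ i) (hbj : b ≠ j) (h : ({a, i} : Finset ι) ≠ {b, j})
    (ha : 2 ≤ #(devOn U K v {a, i})) (hb : 2 ≤ #(devOn U K v {b, j})) :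
    4 ≤ #(baseSphere U K v) := by
  have hsub := union_subset
    ((devOn_pair_subset_baseSphereAt (U := U) (K := K) (v := v) hai).trans (filter_subset _ _))
    ((devOn_pair_subset_baseSphereAt hbj).trans (filter_subset _ _))
  have hle := card_le_card hsub
  rw [card_union_of_disjoint (disjoint_devOn h)] at hle
  lia

lemma four_le_card_baseSphereAt (ha : a ≠ i) (hb : b ≠ i) (hab : a ≠ b)
    (hdev : 2 ≤ #(devOn U K v {a, i})) (hdev' : 2 ≤ #(devOn U K v {b, i})) :
    4 ≤ #(baseSphereAt U K v i) := by
  have hne : ({a, i} : Finset ι) ≠ {b, i} := fun h => by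
    have hmem : a ∈ ({b, i} : Finset ι) := h ▸ mem_insert_self a _
    simp [ha, hab] at hmem
  have hle := card_le_card <| union_subset (devOn_pair_subset_baseSphereAt (U := U) (K := K)
    (v := v) ha) (devOn_pair_subset_baseSphereAt hb)
  rw [card_union_of_disjoint (disjoint_devOn hne)] at hle
  lia

-- Three pairs cannot all coincide, since together they contain three coordinates.
lemma four_le_card_baseSphere_of_three (hij : i ≠ j) (hik : i ≠ k) (hjk : j ≠ k) (ha : a ≠ i)
    (hb : b ≠ j) (hc : c ≠ k) (hi : 2 ≤ #(devOn U K v {a, i}))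
    (hj : 2 ≤ #(devOn U K v {b, j})) (hk : 2 ≤ #(devOn U K v {c, k})) :
    4 ≤ #(baseSphere U K v) := by
  rcases ne_or_eq ({a, i} : Finset ι) {b, j} with hne | heq
  · exact four_le_card_baseSphere ha hb hne hi hj
  refine four_le_card_baseSphere ha hc (fun heq' => ?_) hi hk
  have hja : j ∈ ({a, i} : Finset ι) := by simp [heq]
  have hka : k ∈ ({a, i} : Finset ι) := by simp [heq']
  simp only [mem_insert, mem_singleton, hij.symm, hik.symm, or_false] at hja hka
  exact hjk (hja.trans hka.symm)

lemma card_baseBall_one_add_card_baseSphere_le :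
    #(baseBall U K v 1) + #(baseSphere U K v) ≤ #(baseBall U K v 2) := by
  have hdisj : Disjoint (baseBall U K v 1) (baseSphere U K v) :=
    disjoint_filter.2 fun u _ h₁ h₂ => by lia
  rw [← card_union_of_disjoint hdisj]
  exact card_le_card <| union_subset (monotone_filter_right U fun u _ h => by lia)
    (monotone_filter_right U fun u _ h => by lia)

end Sphere

lemma RivalCodes.three_le_card_signDiff_of_mem_left [Finite ι] {V W : Finset (Word ι R)}
    {K : Finset ι} {p : ι → R → Bool} {i : ι} (h : RivalCodes V W) {z z' : Word ι R} (hz : z ∈ V)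
    (hz' : z' ∈ V) (hpair : slice (V ∪ W) K K p z = {z, z'}) (hne : z ≠ z')
    (hi : i ∈ signDiff K z z') {a : ι} (ha : a ∈ signDiff K z z') (hai : a ≠ i) :
    3 ≤ #(signDiff K z z') := by
  have hweight := h.sideSign_mul_signProd_eq_neg hpair hne
  rw [sideSign_of_mem hz, sideSign_of_mem hz', one_mul, one_mul] at hweight
  obtain ⟨k, hk⟩ := odd_card_signDiff (K := K) (u := z) (v := z') (by
    rw [hweight]
    rcases signProd_eq_or K z with h | h <;> rw [h] <;> decide)
  have := one_lt_card.2 ⟨a, ha, i, hi, hai⟩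
  lia

namespace ExtremalPair

variable [Finite ι] {V W : Finset (Word ι R)} {K : Finset ι} {p : ι → R → Bool}
  {u v v' w w' y : Word ι R} {i : ι}

lemma signProd_ne_of_core_eq_pair (s : ExtremalPair V W K p v w) (hcore : core V K p v = {v, v'})
    (hne : v ≠ v') : signProd K v ≠ signProd K v' := by
  have hv' : v' ∈ core V K p v := by simp [hcore]
  have h := s.rival.sideSign_mul_signProd_eq_neg (s.slice_union_eq_core.trans hcore) hne
  rw [sideSign_of_mem s.left_mem, sideSign_of_mem (slice_subset hv'), one_mul, one_mul] at h
  rw [h]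
  rcases signProd_eq_or K v with hv | hv <;> rw [hv] <;> decide

lemma two_le_card_slice_sdiff_slice (s : ExtremalPair V W K p v w)
    (hcore : core V K p v = {v, v'}) (hne : v ≠ v') (hi : i ∈ signDiff K v v') :
    2 ≤ #(slice (V ∪ W) (K \ {i}) K p v \ slice (V ∪ W) K K p v) :=
  s.rival.two_le_card_slice_sdiff_slice (s.slice_union_eq_core.trans hcore) hne hi

lemma two_le_card_devWithin_singleton (s : ExtremalPair V W K p v w)
    (hcore : core V K p v = {v, v'}) (hne : v ≠ v') (hi : i ∈ signDiff K v v') :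
    2 ≤ #(devWithin (V ∪ W) K v {i}) :=
  (s.two_le_card_slice_sdiff_slice hcore hne hi).trans
    (card_le_card slice_sdiff_slice_subset_devWithin)

lemma four_le_card_devWithin_or_exists_two_le_card_devOn (s : ExtremalPair V W K p v w)
    (hcore : core V K p v = {v, v'}) (hne : v ≠ v') (hi : i ∈ signDiff K v v') :
    4 ≤ #(devWithin (V ∪ W) K v {i}) ∨ ∃ a ≠ i, 2 ≤ #(devOn (V ∪ W) K v {a, i}) := by
  refine or_iff_not_imp_left.2 fun hdev => ?_
  obtain ⟨z, hz⟩ := card_pos.1 (two_pos.trans_le (s.two_le_card_slice_sdiff_slice hcore hne hi))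
  have hz := slice_sdiff_slice_subset_localDev (mem_signDiff.1 hi).1 hz
  obtain ⟨z', hne', hpair⟩ := s.rival.exists_slice_eq_pair hz (by lia)
  obtain ⟨a, ha, hai⟩ := s.rival.exists_mem_signDiff_ne hz hpair hne' (by lia)
  exact ⟨a, hai, s.rival.two_le_card_devOn hz hpair hne' ha hai⟩

lemma twelve_le_card_baseBall_two_of_card_signDiff_eq_three (s : ExtremalPair V W K p v w)
    (hcore : core V K p v = {v, v'}) (hne : v ≠ v') (h : #(signDiff K v v') = 3) :
    12 ≤ #(baseBall (V ∪ W) K v 2) := by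
  obtain ⟨i, j, k, hij, hik, hjk, hdiff⟩ := card_eq_three.1 h
  have hi : i ∈ signDiff K v v' := by simp [hdiff]
  have hj : j ∈ signDiff K v v' := by simp [hdiff]
  have hk : k ∈ signDiff K v v' := by simp [hdiff]
  have hball := s.card_core_add_sum_devWithin_singleton_le {i, j, k}
  rw [hcore, card_pair hne, sum_insert (by simp [hij, hik]), sum_pair hjk] at hball
  have hsphere := card_baseBall_one_add_card_baseSphere_le (U := V ∪ W) (K := K) (v := v)
  have hi₂ := s.two_le_card_devWithin_singleton hcore hne hi
  have hj₂ := s.two_le_card_devWithin_singleton hcore hne hj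
  have hk₂ := s.two_le_card_devWithin_singleton hcore hne hk
  rcases s.four_le_card_devWithin_or_exists_two_le_card_devOn hcore hne hi with hi₄ | ⟨a, ha, ha₂⟩
  · rcases s.four_le_card_devWithin_or_exists_two_le_card_devOn hcore hne hj with hj₄ | ⟨b, hb, hb₂⟩
    · lia
    · have := two_le_card_baseSphere hb hb₂
      lia
  have := two_le_card_baseSphere ha ha₂
  rcases s.four_le_card_devWithin_or_exists_two_le_card_devOn hcore hne hj with hj₄ | ⟨b, hb, hb₂⟩
  · lia
  rcases s.four_le_card_devWithin_or_exists_two_le_card_devOn hcore hne hk with hk₄ | ⟨c, hc, hc₂⟩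
  · lia
  have := four_le_card_baseSphere_of_three hij hik hjk ha hb hc ha₂ hb₂ hc₂
  lia

lemma twelve_le_card_baseBall_of_core_eq_pair (s : ExtremalPair V W K p v w)
    (hcore : core V K p v = {v, v'}) (hne : v ≠ v') :
    12 ≤ #(baseBall (V ∪ W) K v 1) ∨ 12 ≤ #(baseBall (V ∪ W) K v 2) := by
  have hsign := s.signProd_ne_of_core_eq_pair hcore hne
  have hthree := s.three_le_card_signDiff s.left_mem_core (by simp [hcore]) hsign
  obtain ⟨k, hk⟩ := odd_card_signDiff hsign
  by_cases hfive : 5 ≤ #(signDiff K v v')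
  · left
    have hball := s.card_core_add_sum_devWithin_singleton_le (signDiff K v v')
    have hsum := card_nsmul_le_sum _ _ 2 fun i hi =>
      s.two_le_card_devWithin_singleton hcore hne hi
    rw [hcore, card_pair hne] at hball
    rw [smul_eq_mul] at hsum
    lia
  · exact .inr (s.twelve_le_card_baseBall_two_of_card_signDiff_eq_three hcore hne (by lia))

lemma existsUnique_mem_core_fits (s : ExtremalPair V W K p v w) (hcore : core V K p v = {v, v'})
    (hi : i ∈ signDiff K v v') (t : R → Bool) : ∃! x, x ∈ core V K p v ∧ Fits t (x i) := by
  have hfst : (v' i).1 = (v i).1 := s.fst_eq_of_mem_core (by simp [hcore]) i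
  have hsnd := (mem_signDiff.1 hi).2
  rw [hcore]
  by_cases hv : Fits t (v i)
  · refine ⟨v, ⟨mem_insert_self _ _, hv⟩, fun x ⟨hx, hfits⟩ => ?_⟩
    rcases mem_insert.1 hx with rfl | hx
    · rfl
    · obtain rfl := mem_singleton.1 hx
      exact absurd (congrArg Prod.snd (hv.eq_of_fst_eq hfits hfst.symm)) hsnd
  · have hv' : Fits t (v' i) := by
      unfold Fits at hv ⊢
      rw [hfst, Bool.eq_not_of_ne hv, Bool.eq_not_of_ne hsnd, Bool.not_not]
    refine ⟨v', ⟨by simp, hv'⟩, fun x ⟨hx, hfits⟩ => ?_⟩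
    rcases mem_insert.1 hx with rfl | hx
    exacts [absurd hfits hv, mem_singleton.1 hx]

lemma mem_left_of_fits_core_right (s : ExtremalPair V W K p v w) (hK : K.Nontrivial)
    (hy : y ∈ core W K p w) {t : R → Bool} (hty : Fits t (y i)) (hu : u ∈ V ∪ W)
    (hbase : ∀ j ∈ K, j ≠ i → (u j).1 = (v j).1) (hfits : ∀ j ∉ K, Fits (p j) (u j))
    (htu : Fits t (u i)) : u ∈ V := by
  refine (mem_union.1 hu).resolve_right fun huW => ?_
  obtain ⟨k, hk, hki⟩ := hK.exists_ne i
  have huy : u ≠ y := by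
    rintro rfl
    exact s.fst_ne k hk ((hbase k hk hki).symm.trans (s.symm.fst_eq_of_mem_core hy k))
  obtain ⟨j, hj⟩ := s.rival.right.exists_eq_opp u huW y (slice_subset hy) huy
  rcases eq_or_ne j i with rfl | hji
  · exact htu.ne_opp hty hj
  by_cases hjK : j ∈ K
  · exact s.fst_ne j hjK <| by
      rw [← hbase j hjK hji, hj, opp_fst, s.symm.fst_eq_of_mem_core hy]
  · exact (hfits j hjK).ne_opp ((mem_slice.1 hy).2.2 j hjK) hj

-- In the slice where coordinate `i` is selected by `t` the core has one word; by parity, there is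
-- another one.
lemma exists_mem_left_localDev_fits (s : ExtremalPair V W K p v w) (hK : K.Nontrivial)
    (hcore : core V K p v = {v, v'}) (hi : i ∈ signDiff K v v')
    (hcore' : core W K p w = {w, w'}) (hi' : i ∈ signDiff K w w') (t : R → Bool) :
    ∃ u ∈ V, u ∈ localDev (V ∪ W) K p v i ∧ Fits t (u i) := by
  have hiK := (mem_signDiff.1 hi).1
  obtain ⟨x, ⟨hx, htx⟩, hunique⟩ := s.existsUnique_mem_core_fits hcore hi t
  obtain ⟨y, ⟨hy, hty⟩, -⟩ := s.symm.existsUnique_mem_core_fits hcore' hi' t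
  have hmem {u : Word ι R} : u ∈ slice (V ∪ W) (K \ {i}) (K \ {i}) (Function.update p i t) v ↔
      u ∈ V ∪ W ∧ (∀ j ∈ K, j ≠ i → (u j).1 = (v j).1) ∧ (∀ j ∉ K, Fits (p j) (u j)) ∧
        Fits t (u i) := by
    simp only [mem_slice, mem_sdiff, mem_singleton, and_imp, not_and_or, not_not]
    refine and_congr_right fun _ => and_congr_right fun _ => ⟨fun h => ⟨fun j hj => ?_, ?_⟩, ?_⟩
    · simpa [Function.update_of_ne (ne_of_mem_of_not_mem hiK hj).symm] using h j (.inl hj)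
    · simpa using h i (.inr rfl)
    · rintro ⟨hfits, ht⟩ j hj
      rcases eq_or_ne j i with rfl | hji
      · simpa using ht
      · simpa [Function.update_of_ne hji] using hfits j (hj.resolve_right hji)
  have hxmem := hmem.2 ⟨mem_union_left _ (slice_subset hx), fun j _ _ => s.fst_eq_of_mem_core hx j,
    (mem_slice.1 hx).2.2, htx⟩
  obtain ⟨u, hu, hux⟩ := exists_mem_ne (s.rival.two_le_card_slice Subset.rfl hxmem) x
  obtain ⟨hU, hbase, hfits, htu⟩ := hmem.1 hu
  have huV := s.mem_left_of_fits_core_right hK hy hty hU hbase hfits htu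
  refine ⟨u, huV, slice_sdiff_slice_subset_localDev hiK (mem_sdiff.2 ⟨?_, fun hcoremem => ?_⟩), htu⟩
  · exact mem_slice.2 ⟨hU, fun j hj =>
      hbase j (mem_sdiff.1 hj).1 (notMem_singleton.1 (mem_sdiff.1 hj).2), hfits⟩
  · rw [s.slice_union_eq_core] at hcoremem
    exact hux (hunique u ⟨hcoremem, htu⟩)

lemma four_le_card_devWithin_or_four_le_card_baseSphereAt (s : ExtremalPair V W K p v w)
    (hK : K.Nontrivial) (hcore : core V K p v = {v, v'}) (hi : i ∈ signDiff K v v')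
    (hcore' : core W K p w = {w, w'}) (hi' : i ∈ signDiff K w w') :
    4 ≤ #(devWithin (V ∪ W) K v {i}) ∨ 4 ≤ #(baseSphereAt (V ∪ W) K v i) := by
  refine or_iff_not_imp_left.2 fun hdev => ?_
  have hexists := s.exists_mem_left_localDev_fits hK hcore hi hcore' hi'
  obtain ⟨z, hzV, hz, hztrue⟩ := hexists fun _ => true
  obtain ⟨z', hz'V, hz', hz'false⟩ := hexists fun _ => false
  have hsnd : (z i).2 ≠ (z' i).2 := by rw [← hztrue, ← hz'false]; simp
  have hne : z ≠ z' := fun h => hsnd (by rw [h])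
  have hself := self_mem_slice_of_mem_localDev hz
  have hself' := self_mem_slice_of_mem_localDev hz'
  have hbase : ∀ j ∈ K, (z' j).1 = (z j).1 := by
    by_contra! hbase
    obtain ⟨j, hj, hjne⟩ := hbase
    refine hdev ((s.rival.four_le_card_slice_union Subset.rfl hself' hself hj hjne).trans ?_)
    exact card_le_card <| union_subset (slice_subset_devWithin_of_mem_localDev hz')
      (slice_subset_devWithin_of_mem_localDev hz)
  have hpair : slice (V ∪ W) K K p z = {z, z'} := by
    obtain ⟨x, -, hx⟩ := s.rival.exists_slice_eq_pair hz (by lia)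
    have hmem : z' ∈ slice (V ∪ W) K K p z :=
      mem_slice.2 ⟨(mem_localDev.1 hz').1, hbase, (mem_localDev.1 hz').2.2⟩
    rw [hx, mem_insert, mem_singleton] at hmem
    rw [hx, hmem.resolve_left hne.symm]
  have hidiff : i ∈ signDiff K z z' := mem_signDiff.2 ⟨(mem_signDiff.1 hi).1, hsnd⟩
  obtain ⟨a, ha, hai⟩ := s.rival.exists_mem_signDiff_ne hz hpair hne (by lia)
  have hthree := s.rival.three_le_card_signDiff_of_mem_left hzV hz'V hpair hne hidiff ha hai
  obtain ⟨b, hb, hbai⟩ := exists_mem_notMem_of_card_lt_card (s := {a, i}) <|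
    card_le_two.trans_lt hthree
  simp only [mem_insert, mem_singleton, not_or] at hbai
  exact four_le_card_baseSphereAt hai hbai.2 (Ne.symm hbai.1)
    (s.rival.two_le_card_devOn hz hpair hne ha hai)
    (s.rival.two_le_card_devOn hz hpair hne hb hbai.2)

end ExtremalPair

/-! ### Extremal pairs differ in at least four coordinates -/

/-- A word of `V` that arises from `v` by flipping the letter at `i`, keeping the letter at `j` and
replacing the letter at `k` by that of `w`. It fits `p` outside `K` and differs from `v` in at most
one coordinate there. Such words are forced to exist if an extremal pair differs exactly on
`K = {i, j, k}`. -/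
structure IsSwapWord (V : Finset (Word ι R)) (K : Finset ι) (p : ι → R → Bool) (v w : Word ι R)
    (i j k : ι) (u : Word ι R) : Prop where
  mem : u ∈ V
  eq_opp : u i = opp (v i)
  eq_left : u j = v j
  eq_right : u k = w k
  fits : ∀ q ∉ K, Fits (p q) (u q)
  subsingleton_off : {q | q ∉ K ∧ u q ≠ v q}.Subsingleton

namespace IsSwapWord

variable {V : Finset (Word ι R)} {K : Finset ι} {p p' : ι → R → Bool} {v w w' u u' : Word ι R}
  {i j k q : ι}

lemma exists_eq_opp_off (hV : IsTwinFreeCode V) (hK : K = {i, j, k})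
    (h : IsSwapWord V K p v w i j k u) (h' : IsSwapWord V K p' v w' i k j u')
    (hk : (v k).1 ≠ (w k).1) (hj : (v j).1 ≠ (w' j).1) : ∃ q ∉ K, u q = opp (u' q) := by
  have hne : u ≠ u' := by
    rintro rfl
    exact hj (by rw [← h.eq_left, h'.eq_right])
  obtain ⟨q, hq⟩ := hV.exists_eq_opp u h.mem u' h'.mem hne
  refine ⟨q, fun hqK => ?_, hq⟩
  obtain rfl | rfl | rfl : q = i ∨ q = j ∨ q = k := by simpa [hK] using hqK
  · rw [h.eq_opp, h'.eq_opp] at hq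
    exact opp_ne_self _ hq.symm
  · rw [h.eq_left, h'.eq_right] at hq
    exact hj (by rw [hq, opp_fst])
  · rw [h.eq_right, h'.eq_left] at hq
    exact hk (by rw [hq, opp_fst])

lemma not_isSwapWord_setLetter (hV : IsTwinFreeCode V) (hK : K = {i, j, k})
    (h : IsSwapWord V K p v w i j k u) (hp : ∀ r ∉ K, Fits (p r) (v r)) (hq : q ∉ K)
    (hne : u q ≠ v q) : ¬ IsSwapWord V K (setLetter p q (opp (u q))) v w i j k u' := by
  intro h'
  have heqK (r : ι) (hr : r ∈ K) : u' r = u r := by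
    obtain rfl | rfl | rfl : r = i ∨ r = j ∨ r = k := by simpa [hK] using hr
    · rw [h.eq_opp, h'.eq_opp]
    · rw [h.eq_left, h'.eq_left]
    · rw [h.eq_right, h'.eq_right]
  have hfits := h'.fits q hq
  have huu' : u' ≠ u := by
    rintro rfl
    exact hfits.ne_opp (fits_setLetter_self p q _) (opp_opp _).symm
  obtain ⟨r, hr⟩ := hV.exists_eq_opp u' h'.mem u h.mem huu'
  obtain rfl : r = q := by
    by_contra hrq
    by_cases hrK : r ∈ K
    · exact opp_ne_self _ (hr.symm.trans (heqK r hrK))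
    · have hfits := h'.fits r hrK
      rw [setLetter_of_ne p hrq] at hfits
      exact hfits.ne_opp (h.fits r hrK) hr
  have hne' : u' r ≠ v r := fun h'v =>
    (h.fits r hq).ne_opp (hp r hq) (eq_opp_comm.1 (h'v ▸ hr))
  obtain ⟨c, hcr, hc⟩ := hV.exists_ne u' h'.mem u h.mem r hr
  have hcK : c ∉ K := fun hcK => hc (heqK c hcK)
  have hcv : u c = v c := by_contra fun hcv => hcr (h.subsingleton_off ⟨hcK, hcv⟩ ⟨hq, hne⟩)
  have hcv' : u' c = v c := by_contra fun hcv => hcr (h'.subsingleton_off ⟨hcK, hcv⟩ ⟨hq, hne'⟩)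
  exact hc (hcv'.trans hcv.symm)

end IsSwapWord

lemma pairwise_ne_of_card_eq_three {i j k : ι} (h : #{i, j, k} = 3) : i ≠ j ∧ i ≠ k ∧ j ≠ k := by
  have hle (a b : ι) : #{a, b} ≤ 2 := card_le_two
  refine ⟨?_, ?_, ?_⟩ <;> rintro rfl <;> simp at h <;> grind

namespace ExtremalPair

variable {V W : Finset (Word ι R)} {K : Finset ι} {p p' : ι → R → Bool}
  {v w w₁ w₂ u u' : Word ι R} {i j k q : ι}

lemma fst_ne_of_mem_core_right (s : ExtremalPair V W K p v w) (hw₁ : w₁ ∈ core W K p w)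
    (hi : i ∈ K) : (v i).1 ≠ (w₁ i).1 := by
  rw [(mem_slice.1 hw₁).2.1 i hi]
  exact s.fst_ne i hi

lemma not_isSwapWord_swap (s : ExtremalPair V W K p v w) (hK : K = {i, j, k})
    (hw₁ : w₁ ∈ core W K p w) (hw₂ : w₂ ∈ core W K p w) (h : IsSwapWord V K p' v w₁ i j k u) :
    ¬ IsSwapWord V K p' v w₂ i k j u' := by
  intro h'
  obtain ⟨q, hq, hopp⟩ := h.exists_eq_opp_off s.rival.left hK h'
    (s.fst_ne_of_mem_core_right hw₁ (by simp [hK])) (s.fst_ne_of_mem_core_right hw₂ (by simp [hK]))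
  exact (h.fits q hq).ne_opp (h'.fits q hq) hopp

lemma setLetter_of_fst_ne (s : ExtremalPair V W K p v w) {a : R × Bool} (hv : (v i).1 ≠ a.1)
    (hw : (w i).1 ≠ a.1) : ExtremalPair V W K (setLetter p i a) v w where
  __ := s
  fits_left q := by
    rcases eq_or_ne q i with rfl | hq
    · exact (fits_setLetter_iff_of_fst_ne hv).2 (s.fits_left q)
    · rw [setLetter_of_ne p hq]
      exact s.fits_left q
  fits_right q := by
    rcases eq_or_ne q i with rfl | hq
    · exact (fits_setLetter_iff_of_fst_ne hw).2 (s.fits_right q)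
    · rw [setLetter_of_ne p hq]
      exact s.fits_right q

variable [Finite ι]

lemma exists_pattern_of_mem_core_right (s : ExtremalPair V W K p v w) (hw₁ : w₁ ∈ core W K p w)
    (hp' : ∀ q ∉ K, Fits (p' q) (v q)) :
    ∃ p'', (∀ q ∉ K, p'' q = p' q) ∧ ExtremalPair V W K p'' v w₁ := by
  have heq_off (q : ι) (hq : q ∉ K) : v q = w₁ q := by
    rw [s.eq_off q hq, s.symm.eq_left_off_of_mem_core hw₁ q hq]
  refine ⟨fun q => if q ∈ K then fun r => if r = (v q).1 then (v q).2 else (w₁ q).2 else p' q,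
    fun q hq => if_neg hq, ?_⟩
  refine ⟨s.rival, s.left_mem, slice_subset hw₁, fun q hq => s.fst_ne_of_mem_core_right hw₁ hq,
    heq_off, fun q => ?_, fun q => ?_, s.maximal⟩ <;> by_cases hq : q ∈ K
  · simp [hq, Fits]
  · simpa [hq] using hp' q hq
  · simp [hq, Fits, (s.fst_ne_of_mem_core_right hw₁ hq).symm]
  · simpa [hq, ← heq_off q hq] using hp' q hq

lemma exists_mem_core_signProd_ne (s : ExtremalPair V W K p v w) :
    ∃ x ∈ core V K p v, signProd K x ≠ signProd K v := by
  have hpos := s.card_posCore_pos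
  rcases signProd_eq_or K v with hv | hv
  · obtain ⟨x, hx⟩ := card_pos.1 (s.card_posCore_eq_card_negCore ▸ hpos)
    exact ⟨x, negCore_subset hx, by rw [signProd_of_mem_negCore hx, hv]; decide⟩
  · obtain ⟨x, hx⟩ := card_pos.1 hpos
    exact ⟨x, posCore_subset hx, by rw [signProd_of_mem_posCore hx, hv]; decide⟩

lemma three_le_card (s : ExtremalPair V W K p v w) : 3 ≤ #K := by
  obtain ⟨x, hx, hne⟩ := s.exists_mem_core_signProd_ne
  exact (s.three_le_card_signDiff hx s.left_mem_core hne).trans (card_le_card (filter_subset _ _))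

lemma exists_mem_core_eq_opp_of_card_eq_three (s : ExtremalPair V W K p v w) (hK : #K = 3) :
    ∃ x ∈ core V K p v, ∀ q ∈ K, x q = opp (v q) := by
  obtain ⟨x, hx, hne⟩ := s.exists_mem_core_signProd_ne
  have hdiff : signDiff K x v = K := eq_of_subset_of_card_le (filter_subset _ _)
    (hK.trans_le (s.three_le_card_signDiff hx s.left_mem_core hne))
  refine ⟨x, hx, fun q hq => eq_opp_of_fst_eq_of_snd_ne (s.fst_eq_of_mem_core hx q) ?_⟩
  rw [← hdiff] at hq
  exact (mem_signDiff.1 hq).2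

lemma exists_eq_opp_and_xor (s : ExtremalPair V W K p v w) (hcard : #K = 3) (hK : K = {i, j, k}) :
    ∃ u ∈ V, u i = opp (v i) ∧ (∀ q ≠ i, Fits (p q) (u q)) ∧ Xor (u j = v j) (u k = v k) := by
  obtain ⟨hij, hik, -⟩ := pairwise_ne_of_card_eq_three (hK ▸ hcard)
  have hiK : i ∈ K := by simp [hK]
  obtain ⟨x, hx, hxopp⟩ := s.exists_mem_core_eq_opp_of_card_eq_three hcard
  obtain ⟨u, hu, hui, hfits⟩ := s.exists_eq_opp_and_fits_ne hiK
  have heq_of_ne_opp (q : ι) (hqi : q ≠ i) (hq : u q = opp (x q)) : u q = v q :=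
    (hfits q hqi).eq_of_fst_eq (s.fits_left q) (by rw [hq, opp_fst, s.fst_eq_of_mem_core hx])
  have hor : u j = v j ∨ u k = v k := by
    have hux : u ≠ x := by
      rintro rfl
      exact (hfits j hij.symm).ne_opp (s.fits_left j) (hxopp j (by simp [hK]))
    obtain ⟨q, hq⟩ := s.rival.left.exists_eq_opp u hu x (slice_subset hx) hux
    have hqi : q ≠ i := by
      rintro rfl
      exact opp_ne_self _ (hq.symm.trans (hui.trans (hxopp q hiK).symm))
    by_cases hqK : q ∈ K
    · obtain rfl | rfl | rfl : q = i ∨ q = j ∨ q = k := by simpa [hK] using hqK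
      · exact absurd rfl hqi
      · exact .inl (heq_of_ne_opp q hqi hq)
      · exact .inr (heq_of_ne_opp q hqi hq)
    · exact absurd (s.eq_left_off_of_mem_core hx q hqK ▸ hq)
        ((hfits q hqi).ne_opp (s.fits_left q))
  have hnand : ¬ (u j = v j ∧ u k = v k) := by
    rintro ⟨huj, huk⟩
    have hbase (q : ι) (hq : q ∈ K) : (u q).1 = (v q).1 := by
      obtain rfl | rfl | rfl : q = i ∨ q = j ∨ q = k := by simpa [hK] using hq
      · rw [hui, opp_fst]
      · rw [huj]
      · rw [huk]
    have hcore : u ∈ core V K p v :=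
      mem_slice.2 ⟨hu, hbase, fun q hq => hfits q fun hqi => hq (hqi ▸ hiK)⟩
    obtain ⟨q, hqi, hq⟩ := s.rival.left.exists_ne u hu v s.left_mem i hui
    exact hq ((hfits q hqi).eq_of_fst_eq (s.fits_left q) (s.fst_eq_of_mem_core hcore q))
  exact ⟨u, hu, hui, hfits, xor_iff_or_and_not_and _ _ |>.2 ⟨hor, hnand⟩⟩

lemma eq_left_off_of_eq_opp_of_eq_left (s : ExtremalPair V W K p v w) (hK : K = {i, j, k})
    (hu : u ∈ V) (hui : u i = opp (v i)) (huj : u j = v j) (huk : (u k).1 ≠ (w k).1)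
    (hfits : ∀ q ∉ K, Fits (p q) (u q)) : ∀ q ∉ K, u q = v q := by
  refine s.eq_left_off hu hfits fun q hq => ?_
  obtain rfl | rfl | rfl : q = i ∨ q = j ∨ q = k := by simpa [hK] using hq
  · rw [hui, opp_fst]
    exact s.fst_ne q hq
  · rw [huj]
    exact s.fst_ne q hq
  · exact huk

-- Otherwise flip the letter selected at `k` as well: the word obtained then is a twin of `u`.
lemma eq_right_of_eq_opp_of_eq_left (s : ExtremalPair V W K p v w) (hcard : #K = 3)
    (hK : K = {i, j, k}) (hu : u ∈ V) (hui : u i = opp (v i))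
    (hfits : ∀ q ≠ i, Fits (p q) (u q)) (huj : u j = v j) (huk : u k ≠ v k) : u k = w k := by
  obtain ⟨hij, hik, hjk⟩ := pairwise_ne_of_card_eq_three (hK ▸ hcard)
  by_contra huw
  have hv : (v k).1 ≠ (u k).1 := fun h =>
    huk ((hfits k hik.symm).eq_of_fst_eq (s.fits_left k) h.symm)
  have hw : (w k).1 ≠ (u k).1 := fun h =>
    huw ((hfits k hik.symm).eq_of_fst_eq (s.fits_right k) h.symm)
  have s' := s.setLetter_of_fst_ne (a := opp (u k)) hv hw
  obtain ⟨x, hx, hxi, hxfits, hxor⟩ := s'.exists_eq_opp_and_xor hcard hK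
  have hxfits' (q : ι) (hqi : q ≠ i) (hqk : q ≠ k) : Fits (p q) (x q) := by
    simpa only [setLetter_of_ne p hqk] using hxfits q hqi
  have hxu : x ≠ u := by
    rintro rfl
    exact (hxfits k hik.symm).ne_opp (fits_setLetter_self p k _) (opp_opp _).symm
  obtain ⟨q, hq⟩ := s.rival.left.exists_eq_opp x hx u hu hxu
  obtain rfl : q = k := by
    by_contra hqk
    rcases eq_or_ne q i with rfl | hqi
    · exact opp_ne_self _ (hq.symm.trans (hxi.trans hui.symm))
    · exact (hxfits' q hqi hqk).ne_opp (hfits q hqi) hq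
  have hxq : (x q).1 = (u q).1 := by rw [hq, opp_fst]
  have hxj : x j = v j := hxor.or.resolve_right fun h => hv (by rw [← h, hxq])
  have hmemK (r : ι) (hr : r ∉ K) : r ≠ i ∧ r ≠ q := by simp_all
  obtain ⟨c, hcq, hc⟩ := s.rival.left.exists_ne x hx u hu q hq
  refine hc ?_
  by_cases hcK : c ∈ K
  · obtain rfl | rfl | rfl : c = i ∨ c = j ∨ c = q := by simpa [hK] using hcK
    · rw [hxi, hui]
    · rw [hxj, huj]
    · exact absurd rfl hcq
  · rw [s.eq_left_off_of_eq_opp_of_eq_left hK hx hxi hxj (hxq ▸ hw.symm)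
        (fun r hr => hxfits' r (hmemK r hr).1 (hmemK r hr).2) c hcK,
      s.eq_left_off_of_eq_opp_of_eq_left hK hu hui huj hw.symm
        (fun r hr => hfits r (hmemK r hr).1) c hcK]

lemma subsingleton_ne_left_off (s : ExtremalPair V W K p v w) (hcard : #K = 3) (hij : i ≠ j)
    (hi : i ∈ K) (hj : j ∈ K) (hu : u ∈ V) (hui : u i = opp (v i))
    (hfits : ∀ q ≠ i, Fits (p q) (u q)) (huj : u j = v j) :
    {q | q ∉ K ∧ u q ≠ v q}.Subsingleton := by
  rintro q ⟨hq, hqv⟩ r ⟨hr, hrv⟩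
  by_contra hqr
  have hiw : (u i).1 ≠ (w i).1 := by
    rw [hui, opp_fst]
    exact s.fst_ne i hi
  have hle : {c | u c ≠ w c}.ncard ≤ #K := s.maximal u hu w s.right_mem fun c => by
    rcases eq_or_ne c i with rfl | hci
    · exact fun h => hiw (by rw [h, opp_fst])
    · exact (hfits c hci).ne_opp (s.fits_right c)
  have hsub : (({i, j, q, r} : Finset ι) : Set ι) ⊆ {c | u c ≠ w c} := by
    simp only [coe_insert, coe_singleton, Set.insert_subset_iff, Set.singleton_subset_iff]
    refine ⟨fun h => hiw (by rw [h]), fun h => s.fst_ne j hj (by rw [← huj, h]), ?_, ?_⟩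
    · rwa [Set.mem_ofPred_eq, ← s.eq_off q hq]
    · rwa [Set.mem_ofPred_eq, ← s.eq_off r hr]
  have hfour : #{i, j, q, r} = 4 := by
    have hne (c d : ι) (hc : c ∈ K) (hd : d ∉ K) : c ≠ d := fun h => hd (h ▸ hc)
    simp [hij, hqr, hne i q hi hq, hne i r hi hr, hne j q hj hq, hne j r hj hr]
  have := Set.ncard_le_ncard hsub
  rw [Set.ncard_coe_finset] at this
  lia

lemma exists_isSwapWord (s : ExtremalPair V W K p v w) (hcard : #K = 3) (hK : K = {i, j, k}) :
    ∃ u, IsSwapWord V K p v w i j k u ∨ IsSwapWord V K p v w i k j u := by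
  obtain ⟨hij, hik, -⟩ := pairwise_ne_of_card_eq_three (hK ▸ hcard)
  have hK' : K = {i, k, j} := by rw [hK, pair_comm]
  obtain ⟨u, hu, hui, hfits, hxor⟩ := s.exists_eq_opp_and_xor hcard hK
  have hfitsK (q : ι) (hq : q ∉ K) : Fits (p q) (u q) := hfits q (by simp_all)
  refine ⟨u, hxor.imp (fun ⟨hj, hk⟩ => ?_) fun ⟨hk, hj⟩ => ?_⟩
  · exact ⟨hu, hui, hj, s.eq_right_of_eq_opp_of_eq_left hcard hK hu hui hfits hj hk, hfitsK,
      s.subsingleton_ne_left_off hcard hij (by simp [hK]) (by simp [hK]) hu hui hfits hj⟩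
  · exact ⟨hu, hui, hk, s.eq_right_of_eq_opp_of_eq_left hcard hK' hu hui hfits hk hj, hfitsK,
      s.subsingleton_ne_left_off hcard hik (by simp [hK]) (by simp [hK]) hu hui hfits hk⟩

lemma exists_isSwapWord_of_fits (s : ExtremalPair V W K p v w) (hcard : #K = 3)
    (hK : K = {i, j, k}) (hw₁ : w₁ ∈ core W K p w) (hp' : ∀ q ∉ K, Fits (p' q) (v q)) :
    ∃ u, IsSwapWord V K p' v w₁ i j k u ∨ IsSwapWord V K p' v w₁ i k j u := by
  obtain ⟨p'', hp'', s'⟩ := s.exists_pattern_of_mem_core_right hw₁ hp'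
  obtain ⟨u, hu⟩ := s'.exists_isSwapWord hcard hK
  exact ⟨u, hu.imp (fun h => { h with fits := fun q hq => hp'' q hq ▸ h.fits q hq })
    fun h => { h with fits := fun q hq => hp'' q hq ▸ h.fits q hq }⟩

lemma eq_of_isSwapWord_of_ne_left (s : ExtremalPair V W K p v w) (hcard : #K = 3)
    (hK : K = {i, j, k}) (hw₁ : w₁ ∈ core W K p w) (hw₂ : w₂ ∈ core W K p w)
    (h : IsSwapWord V K p v w₁ i j k u) (h' : IsSwapWord V K p v w₂ i j k u') (hq : q ∉ K)
    (hne : u q ≠ v q) : u q = u' q := by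
  by_contra hqu
  have hbase : (v q).1 ≠ (u q).1 := fun hb =>
    hne ((h.fits q hq).eq_of_fst_eq (s.fits_left q) hb.symm)
  have hp' (r : ι) (_ : r ∉ K) : Fits (setLetter p q (opp (u q)) r) (v r) := by
    rcases eq_or_ne r q with rfl | hrq
    · exact (fits_setLetter_iff_of_fst_ne (a := opp (u r)) hbase).2 (s.fits_left r)
    · rw [setLetter_of_ne p hrq]
      exact s.fits_left r
  obtain ⟨x, hx⟩ := s.exists_isSwapWord_of_fits hcard hK hw₁ hp'
  obtain ⟨y, hy⟩ := s.exists_isSwapWord_of_fits hcard hK hw₂ hp'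
  have hx := hx.resolve_left
    (h.not_isSwapWord_setLetter s.rival.left hK (fun r _ => s.fits_left r) hq hne)
  have hy := hy.resolve_left fun hy => s.not_isSwapWord_swap hK hw₂ hw₁ hy hx
  obtain ⟨r, hr, hopp⟩ := h'.exists_eq_opp_off s.rival.left hK hy
    (s.fst_ne_of_mem_core_right hw₂ (by simp [hK])) (s.fst_ne_of_mem_core_right hw₂ (by simp [hK]))
  refine (h'.fits r hr).ne_opp ?_ hopp
  have hfits := hy.fits r hr
  rcases eq_or_ne r q with rfl | hrq
  · refine (fits_setLetter_iff_of_fst_ne (a := opp (u r)) fun hb => hqu ?_).1 hfits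
    exact (h.fits r hr).eq_of_fst_eq (h'.fits r hr) (by rw [hopp, opp_fst, hb, opp_fst])
  · rwa [setLetter_of_ne p hrq] at hfits

lemma not_isSwapWord_of_eq_opp (s : ExtremalPair V W K p v w) (hcard : #K = 3)
    (hK : K = {i, j, k}) (hw₁ : w₁ ∈ core W K p w) (hw₂ : w₂ ∈ core W K p w)
    (hopp : w₁ k = opp (w₂ k)) (h : IsSwapWord V K p v w₁ i j k u) :
    ¬ IsSwapWord V K p v w₂ i j k u' := by
  intro h'
  obtain ⟨q, hqk, hq⟩ := s.rival.left.exists_ne u h.mem u' h'.mem k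
    (by rw [h.eq_right, h'.eq_right, hopp])
  have hqK : q ∉ K := by
    intro hqK
    obtain rfl | rfl | rfl : q = i ∨ q = j ∨ q = k := by simpa [hK] using hqK
    · exact hq (h.eq_opp.trans h'.eq_opp.symm)
    · exact hq (h.eq_left.trans h'.eq_left.symm)
    · exact hqk rfl
  by_cases hqv : u q = v q
  · exact hq (s.eq_of_isSwapWord_of_ne_left hcard hK hw₂ hw₁ h' h hqK
      fun hqv' => hq (hqv.trans hqv'.symm)).symm
  · exact hq (s.eq_of_isSwapWord_of_ne_left hcard hK hw₁ hw₂ h h' hqK hqv)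

lemma card_ne_three (s : ExtremalPair V W K p v w) : #K ≠ 3 := by
  intro hcard
  obtain ⟨i, j, k, -, -, -, hK⟩ := card_eq_three.1 hcard
  have hK' : K = {i, k, j} := by rw [hK, pair_comm]
  have hw := s.symm.left_mem_core
  obtain ⟨w', hw', hopp⟩ := s.symm.exists_mem_core_eq_opp_of_card_eq_three hcard
  have hfits (q : ι) (_ : q ∉ K) : Fits (p q) (v q) := s.fits_left q
  obtain ⟨u, hu | hu⟩ := s.exists_isSwapWord_of_fits hcard hK hw hfits <;>
    obtain ⟨u', hu' | hu'⟩ := s.exists_isSwapWord_of_fits hcard hK hw' hfits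
  · exact s.not_isSwapWord_of_eq_opp hcard hK hw' hw (hopp k (by simp [hK])) hu' hu
  · exact s.not_isSwapWord_swap hK hw hw' hu hu'
  · exact s.not_isSwapWord_swap hK hw' hw hu' hu
  · exact s.not_isSwapWord_of_eq_opp hcard hK' hw' hw (hopp j (by simp [hK])) hu' hu

lemma four_le_card (s : ExtremalPair V W K p v w) : 4 ≤ #K :=
  s.three_le_card.lt_of_ne s.card_ne_three.symm

end ExtremalPair

/-! ### Rival codes have at least twenty-four words -/

section Disjointness

variable {U : Finset (Word ι R)} {K : Finset ι} {v w : Word ι R}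

lemma subset_baseDiff_union_baseDiff (h : ∀ i ∈ K, (v i).1 ≠ (w i).1) (u : Word ι R) :
    K ⊆ baseDiff K v u ∪ baseDiff K w u := by
  intro i hi
  by_contra hnot
  simp only [mem_union, mem_baseDiff, hi, true_and, not_or, not_not] at hnot
  exact h i hi (hnot.1.symm.trans hnot.2)

lemma card_le_card_baseDiff_add_card_baseDiff (h : ∀ i ∈ K, (v i).1 ≠ (w i).1) (u : Word ι R) :
    #K ≤ #(baseDiff K v u) + #(baseDiff K w u) :=
  (card_le_card (subset_baseDiff_union_baseDiff h u)).trans (card_union_le _ _)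

lemma disjoint_baseBall (h : ∀ i ∈ K, (v i).1 ≠ (w i).1) {r t : ℕ} (hrt : r + t < #K) :
    Disjoint (baseBall U K v r) (baseBall U K w t) :=
  disjoint_filter.2 fun u _ hr ht => by
    have := card_le_card_baseDiff_add_card_baseDiff h u
    lia

lemma card_baseBall_add_card_baseBall_le (h : ∀ i ∈ K, (v i).1 ≠ (w i).1) {r t : ℕ}
    (hrt : r + t < #K) : #(baseBall U K v r) + #(baseBall U K w t) ≤ #U := by
  rw [← card_union_of_disjoint (disjoint_baseBall h hrt)]
  exact card_le_card (union_subset (filter_subset _ _) (filter_subset _ _))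

lemma baseBall_mono {r t : ℕ} (hrt : r ≤ t) : baseBall U K v r ⊆ baseBall U K v t :=
  monotone_filter_right _ fun _ _ hr => hr.trans hrt

-- A word that deviates at `a` from both `v` and `w` has at least `#K + 1 = 5` deviations in total.
lemma card_baseSphereAt_add_card_baseSphereAt_le (h : ∀ i ∈ K, (v i).1 ≠ (w i).1) (hK : #K = 4)
    (a : ι) :
    #(baseSphereAt U K v a) + #(baseSphereAt U K w a) ≤ #(baseSphere U K v ∪ baseSphere U K w) := by
  have hdisj : Disjoint (baseSphereAt U K v a) (baseSphereAt U K w a) := by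
    rw [Finset.disjoint_left]
    intro u hv hw
    obtain ⟨hv, hav⟩ := mem_filter.1 hv
    obtain ⟨hw, haw⟩ := mem_filter.1 hw
    have hcard := card_le_card (subset_baseDiff_union_baseDiff h u)
    have hinter : 0 < #(baseDiff K v u ∩ baseDiff K w u) := card_pos.2 ⟨a, mem_inter.2 ⟨hav, haw⟩⟩
    have := card_union_add_card_inter (baseDiff K v u) (baseDiff K w u)
    have := (mem_filter.1 hv).2
    have := (mem_filter.1 hw).2
    lia
  rw [← card_union_of_disjoint hdisj]
  exact card_le_card (union_subset_union (filter_subset _ _) (filter_subset _ _))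

lemma card_baseBall_one_add_card_baseSphere_union_le (h : ∀ i ∈ K, (v i).1 ≠ (w i).1)
    (hK : #K = 4) :
    #(baseBall U K v 1) + #(baseBall U K w 1) + #(baseSphere U K v ∪ baseSphere U K w) ≤ #U := by
  have hdisj : Disjoint (baseBall U K v 1 ∪ baseBall U K w 1)
      (baseSphere U K v ∪ baseSphere U K w) := by
    rw [Finset.disjoint_left]
    intro u hball hsphere
    have := card_le_card_baseDiff_add_card_baseDiff h u
    simp only [baseBall, baseSphere, mem_union, mem_filter] at hball hsphere
    lia
  rw [← card_union_of_disjoint (disjoint_baseBall h (by lia)), ← card_union_of_disjoint hdisj]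
  simp only [baseBall, baseSphere]
  refine card_le_card (union_subset (union_subset ?_ ?_) (union_subset ?_ ?_)) <;>
    exact filter_subset _ _

end Disjointness

namespace ExtremalPair

variable {V W : Finset (Word ι R)} {K : Finset ι} {p : ι → R → Bool} {v w v' w' : Word ι R}
  {i j : ι} [Finite ι]

lemma twelve_le_card_left_or_baseBall (s : ExtremalPair V W K p v w) :
    12 ≤ #V ∨ 12 ≤ #(baseBall (V ∪ W) K v 1) ∨
      (5 ≤ #K ∨ #(core V K p v) = 2) ∧ 12 ≤ #(baseBall (V ∪ W) K v 2) := by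
  have hK := s.four_le_card
  have hV := s.card_core_add_card_le
  have hcore := card_core_eq_add (V := V) (K := K) (p := p) (v := v)
  have hbalance := s.card_posCore_eq_card_negCore
  have hpos := s.card_posCore_pos
  by_cases hV12 : 12 ≤ #V
  · exact .inl hV12
  right
  obtain h1 | h2 | ⟨h3, hK5⟩ : #(posCore V K p v) = 1 ∨ #(posCore V K p v) = 2 ∨
      #(posCore V K p v) = 3 ∧ #K ≤ 5 := by lia
  · have hcore2 : #(core V K p v) = 2 := by lia
    obtain ⟨v', hne, hpair⟩ := exists_eq_pair_of_mem_of_card_eq_two s.left_mem_core hcore2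
    exact (s.twelve_le_card_baseBall_of_core_eq_pair hpair hne).imp_right fun h =>
      ⟨.inr hcore2, h⟩
  · exact (s.twelve_le_card_baseBall_of_card_posCore_eq_two h2).imp_right fun h =>
      ⟨.inl h.2, h.1⟩
  · exact .inl (s.twelve_le_card_baseBall_one_of_card_posCore_eq_three h3 hK5)

lemma card_signDiff_eq_three (s : ExtremalPair V W K p v w) (hK : #K = 4)
    (hcore : core V K p v = {v, v'}) (hne : v ≠ v') : #(signDiff K v v') = 3 := by
  have hsign := s.signProd_ne_of_core_eq_pair hcore hne
  have hthree := s.three_le_card_signDiff s.left_mem_core (by simp [hcore]) hsign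
  have hle : #(signDiff K v v') ≤ #K := card_le_card (filter_subset _ _)
  obtain ⟨m, hm⟩ := odd_card_signDiff hsign
  lia

lemma card_devWithin_add_card_devWithin_add_four_le (s : ExtremalPair V W K p v w)
    (hcore : core V K p v = {v, v'}) (hne : v ≠ v') (hcard : #(signDiff K v v') = 3)
    (hi : i ∈ signDiff K v v') (hj : j ∈ signDiff K v v') (hij : i ≠ j) :
    #(devWithin (V ∪ W) K v {i}) + #(devWithin (V ∪ W) K v {j}) + 4 ≤
      #(baseBall (V ∪ W) K v 1) := by
  have hball := s.card_core_add_sum_devWithin_singleton_le (signDiff K v v')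
  have hj' : j ∈ (signDiff K v v').erase i := mem_erase.2 ⟨hij.symm, hj⟩
  obtain ⟨k, hk⟩ : ∃ k, ((signDiff K v v').erase i).erase j = {k} := by
    rw [← card_eq_one, card_erase_of_mem hj', card_erase_of_mem hi, hcard]
  have hkmem : k ∈ signDiff K v v' :=
    mem_of_mem_erase (mem_of_mem_erase (hk ▸ mem_singleton_self k))
  have hkdev := s.two_le_card_devWithin_singleton hcore hne hkmem
  rw [← add_sum_erase _ _ hi, ← add_sum_erase _ _ hj', hk, sum_singleton, hcore,
    card_pair hne] at hball
  lia

lemma twentyFour_le_card_union_of_core_eq_pair (s : ExtremalPair V W K p v w) (hK : #K = 4)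
    (hcore : core V K p v = {v, v'}) (hne : v ≠ v') (hcore' : core W K p w = {w, w'})
    (hne' : w ≠ w') : 24 ≤ #(V ∪ W) := by
  have hdiff := s.card_signDiff_eq_three hK hcore hne
  have hdiff' := s.symm.card_signDiff_eq_three hK hcore' hne'
  have hinter : 1 < #(signDiff K v v' ∩ signDiff K w w') := by
    have hunion : #(signDiff K v v' ∪ signDiff K w w') ≤ #K :=
      card_le_card (union_subset (filter_subset _ _) (filter_subset _ _))
    have := card_union_add_card_inter (signDiff K v v') (signDiff K w w')
    lia
  obtain ⟨i, hi, j, hj, hij⟩ := one_lt_card.1 hinter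
  obtain ⟨hi, hi'⟩ := mem_inter.1 hi
  obtain ⟨hj, hj'⟩ := mem_inter.1 hj
  have hKnt : K.Nontrivial := one_lt_card_iff_nontrivial.1 (by lia)
  have hball := s.card_devWithin_add_card_devWithin_add_four_le hcore hne hdiff hi hj hij
  have hball' := s.symm.card_devWithin_add_card_devWithin_add_four_le hcore' hne' hdiff' hi' hj' hij
  have hdev_i := s.two_le_card_devWithin_singleton hcore hne hi
  have hdev_j := s.two_le_card_devWithin_singleton hcore hne hj
  have hdev_i' := s.symm.two_le_card_devWithin_singleton hcore' hne' hi'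
  have hdev_j' := s.symm.two_le_card_devWithin_singleton hcore' hne' hj'
  have hor_i := s.four_le_card_devWithin_or_four_le_card_baseSphereAt hKnt hcore hi hcore' hi'
  have hor_j := s.four_le_card_devWithin_or_four_le_card_baseSphereAt hKnt hcore hj hcore' hj'
  have hor_i' := s.symm.four_le_card_devWithin_or_four_le_card_baseSphereAt hKnt hcore' hi' hcore hi
  have hor_j' := s.symm.four_le_card_devWithin_or_four_le_card_baseSphereAt hKnt hcore' hj' hcore hj
  rw [union_comm W V] at hball' hdev_i' hdev_j' hor_i' hor_j'
  have hsphere_i := card_baseSphereAt_add_card_baseSphereAt_le (U := V ∪ W) s.fst_ne hK i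
  have hsphere_j := card_baseSphereAt_add_card_baseSphereAt_le (U := V ∪ W) s.fst_ne hK j
  have htotal := card_baseBall_one_add_card_baseSphere_union_le (U := V ∪ W) s.fst_ne hK
  lia

lemma twentyFour_le_card_add_card (s : ExtremalPair V W K p v w) : 24 ≤ #V + #W := by
  have hcard := s.rival.card_eq
  have hK := s.four_le_card
  have hunion := card_union_le V W
  have hmono := card_le_card (baseBall_mono (U := V ∪ W) (K := K) (v := v) one_le_two)
  have hballs (r t : ℕ) (hrt : r + t < #K) :=
    card_baseBall_add_card_baseBall_le (U := V ∪ W) s.fst_ne hrt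
  have hleft := s.twelve_le_card_left_or_baseBall
  have hright := s.symm.twelve_le_card_left_or_baseBall
  rw [union_comm W V] at hright
  by_cases hpairs : #K = 4 ∧ #(core V K p v) = 2 ∧ #(core W K p w) = 2
  · obtain ⟨hK4, hcore, hcore'⟩ := hpairs
    obtain ⟨v', hne, hpair⟩ := exists_eq_pair_of_mem_of_card_eq_two s.left_mem_core hcore
    obtain ⟨w', hne', hpair'⟩ := exists_eq_pair_of_mem_of_card_eq_two s.symm.left_mem_core hcore'
    exact (s.twentyFour_le_card_union_of_core_eq_pair hK4 hpair hne hpair' hne').trans hunion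
  · have h12 := hballs 1 2
    have h21 := hballs 2 1
    have h22 := hballs 2 2
    lia

end ExtremalPair

namespace RivalCodes

variable {V W : Finset (Word ι R)} [Finite ι]

lemma exists_extremalPair (h : RivalCodes V W) (hV : V.Nonempty) :
    ∃ K p v w, ExtremalPair V W K p v w := by
  obtain ⟨v₀, hv₀⟩ := hV
  have hfits₀ : FitsWord (fun i _ => (v₀ i).2) v₀ := fun _ => rfl
  obtain ⟨w₀, hw₀, hfits⟩ := h.symm.exists_left_of_right hv₀ hfits₀
  obtain ⟨⟨v, w⟩, hmem, hmax⟩ := exists_max_image {x ∈ V ×ˢ W | ∀ i, x.1 i ≠ opp (x.2 i)}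
    (fun x => {i | x.1 i ≠ x.2 i}.ncard)
    ⟨(v₀, w₀), mem_filter.2 ⟨mem_product.2 ⟨hv₀, hw₀⟩, fun i => (hfits₀ i).ne_opp (hfits i)⟩⟩
  simp only [mem_filter, mem_product] at hmem hmax
  obtain ⟨⟨hv, hw⟩, hopp⟩ := hmem
  have hfst (i : ι) (hi : v i ≠ w i) : (v i).1 ≠ (w i).1 := fun hfst =>
    (eq_or_eq_opp_of_fst_eq hfst).elim hi (hopp i)
  refine ⟨(Set.toFinite {i | v i ≠ w i}).toFinset,
    fun i r => if r = (v i).1 then (v i).2 else (w i).2, v, w,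
    { rival := h, left_mem := hv, right_mem := hw,
      fst_ne := fun i hi => hfst i (by simpa using hi), eq_off := fun i hi => by simpa using hi,
      fits_left := fun i => if_pos rfl, fits_right := fun i => ?_,
      maximal := fun x hx y hy hxy => ?_ }⟩
  · by_cases hi : v i = w i
    · simp [Fits, hi]
    · exact if_neg (hfst i hi).symm
  · rw [← Set.ncard_eq_toFinset_card]
    exact hmax (x, y) ⟨⟨hx, hy⟩, hxy⟩

theorem twentyFour_le_card_add_card (h : RivalCodes V W) (hV : V.Nonempty) : 24 ≤ #V + #W := by
  obtain ⟨K, p, v, w, s⟩ := h.exists_extremalPair hV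
  exact s.twentyFour_le_card_add_card

end RivalCodes

/-! ### Counting the letters that fit a selector -/

section Counting

variable {α : Type*} {s : Finset α} {b : α → R × Bool}

lemma card_fits_eq_card_add_card (q : R → Bool) (r : R) :
    #{t ∈ s | Fits q (b t)} =
      #{t ∈ s | b t = (r, q r)} + #{t ∈ s | (b t).1 ≠ r ∧ Fits q (b t)} := by
  rw [← card_filter_add_card_filter_not (s := {t ∈ s | Fits q (b t)}) fun t => (b t).1 = r,
    filter_filter, filter_filter]
  congr 2 <;> ext t <;> simp only [mem_filter, Fits, Prod.ext_iff] <;> grind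

lemma card_eq_of_card_fits_eq {q q' : R → Bool} {r : R}
    (hcard : #{t ∈ s | Fits q (b t)} = #{t ∈ s | Fits q' (b t)})
    (hqq' : ∀ t ∈ s, (b t).1 ≠ r → q (b t).1 = q' (b t).1) :
    #{t ∈ s | b t = (r, q r)} = #{t ∈ s | b t = (r, q' r)} := by
  have hoff : #{t ∈ s | (b t).1 ≠ r ∧ Fits q (b t)} = #{t ∈ s | (b t).1 ≠ r ∧ Fits q' (b t)} := by
    refine congrArg card (filter_congr fun t ht => and_congr_right fun hr => ?_)
    rw [Fits, Fits, hqq' t ht hr]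
  rw [card_fits_eq_card_add_card q r, card_fits_eq_card_add_card q' r, hoff] at hcard
  exact Nat.add_right_cancel hcard

lemma card_fits_eq_sum (q : R → Bool) :
    #{t ∈ s | Fits q (b t)} = ∑ r ∈ s.image (fun t => (b t).1), #{t ∈ s | b t = (r, q r)} := by
  rw [card_eq_sum_card_fiberwise (f := fun t => (b t).1) (t := s.image fun t => (b t).1)]
  · refine sum_congr rfl fun r _ => ?_
    rw [filter_filter]
    congr 2
    ext t
    simp only [Fits, Prod.ext_iff]
    grind
  · exact fun t ht => mem_image_of_mem _ (mem_filter.1 ht).1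

variable [LinearOrder R] {lo hi : R}

-- The thresholds at `r` and at the largest base below `r` differ only in the letter they select
-- from the pair with base `r`.
lemma card_true_eq_card_false_of_threshold {n : ℕ} (hb : ∀ t ∈ s, (b t).1 ∈ Set.Ioo lo hi)
    (hthr : ∀ m ∈ Set.Ico lo hi, #{t ∈ s | Fits (fun r => decide (m < r)) (b t)} = n)
    {r : R} (hr : r ∈ Set.Ioo lo hi) :
    #{t ∈ s | b t = (r, true)} = #{t ∈ s | b t = (r, false)} := by
  set below : Finset R := insert lo {r' ∈ s.image fun t => (b t).1 | r' < r}
  obtain ⟨m, hm, hmax⟩ := below.exists_max_image id ⟨lo, mem_insert_self _ _⟩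
  have hmr : m < r := by
    rcases mem_insert.1 hm with rfl | hm
    · exact hr.1
    · exact (mem_filter.1 hm).2
  have hlom : lo ≤ m := hmax lo (mem_insert_self _ _)
  have hle {t : α} (ht : t ∈ s) (htr : (b t).1 < r) : (b t).1 ≤ m :=
    hmax _ (mem_insert_of_mem (mem_filter.2 ⟨mem_image_of_mem _ ht, htr⟩))
  have key := card_eq_of_card_fits_eq (s := s) (b := b) (r := r)
    (q := fun r' => decide (m < r')) (q' := fun r' => decide (r < r'))
    ((hthr m ⟨hlom, hmr.trans hr.2⟩).trans (hthr r ⟨hr.1.le, hr.2⟩).symm) fun t ht htr => by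
      rw [decide_eq_decide]
      exact ⟨fun h => (lt_or_gt_of_ne htr).resolve_left fun h' => (hle ht h').not_gt h, hmr.trans⟩
  simpa [hmr] using key

lemma card_fits_eq_of_threshold {n : ℕ} (hlohi : lo < hi) (hb : ∀ t ∈ s, (b t).1 ∈ Set.Ioo lo hi)
    (hthr : ∀ m ∈ Set.Ico lo hi, #{t ∈ s | Fits (fun r => decide (m < r)) (b t)} = n)
    (q : R → Bool) : #{t ∈ s | Fits q (b t)} = n := by
  rw [← hthr lo ⟨le_rfl, hlohi⟩, card_fits_eq_sum, card_fits_eq_sum]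
  refine sum_congr rfl fun r hr => ?_
  obtain ⟨t, ht, rfl⟩ := mem_image.1 hr
  have hpair := card_true_eq_card_false_of_threshold hb hthr (hb t ht)
  cases q (b t).1 <;> cases decide (lo < (b t).1) <;> simp only [hpair]

end Counting

/-! ### Partition codes -/

/-- A code whose words, read as polyboxes, partition the discrete box: every pattern selects exactly
one word. -/
def IsPartitionCode (C : Finset (Word ι R)) : Prop := ∀ p, #{u ∈ C | FitsWord p u} = 1

lemma fitsWord_update_left {p : ι → R → Bool} {i : ι} {q : R → Bool} {u : Word ι R} :
    FitsWord (Function.update p i q) u ↔ (∀ k, k ≠ i → Fits (p k) (u k)) ∧ Fits q (u i) := by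
  refine ⟨fun h => ⟨fun k hk => ?_, by simpa using h i⟩, fun h k => ?_⟩
  · simpa [hk] using h k
  · rcases eq_or_ne k i with rfl | hk
    · simpa using h.2
    · simpa [hk] using h.1 k hk

lemma fitsWord_update_right {p : ι → R → Bool} {i : ι} {a : R × Bool} {u : Word ι R} :
    FitsWord p (Function.update u i a) ↔ (∀ k, k ≠ i → Fits (p k) (u k)) ∧ Fits (p i) a := by
  refine ⟨fun h => ⟨fun k hk => ?_, by simpa using h i⟩, fun h k => ?_⟩
  · simpa [hk] using h k
  · rcases eq_or_ne k i with rfl | hk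
    · simpa using h.2
    · simpa [hk] using h.1 k hk

lemma card_fitsWord_eq_of_threshold [Finite ι] [LinearOrder R] {C : Finset (Word ι R)}
    {lo hi : ι → R} {n : ℕ} (hlohi : ∀ i, lo i < hi i)
    (hb : ∀ u ∈ C, ∀ i, (u i).1 ∈ Set.Ioo (lo i) (hi i))
    (hthr : ∀ m : ι → R, (∀ i, m i ∈ Set.Ico (lo i) (hi i)) →
      #{u ∈ C | FitsWord (fun i r => decide (m i < r)) u} = n) (p : ι → R → Bool) :
    #{u ∈ C | FitsWord p u} = n := by
  suffices hind : ∀ S : Finset ι, ∀ p : ι → R → Bool,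
      (∀ j ∉ S, ∃ m ∈ Set.Ico (lo j) (hi j), p j = fun r => decide (m < r)) →
        #{u ∈ C | FitsWord p u} = n from
    have := Fintype.ofFinite ι
    hind univ p fun j hj => absurd (mem_univ j) hj
  intro S
  induction S using Finset.induction_on with
  | empty =>
    intro p hp
    choose m hm hpm using fun j => hp j (notMem_empty j)
    rw [funext hpm]
    exact hthr m hm
  | insert j S _ ih =>
    intro p hp
    have hsplit (q : R → Bool) : {u ∈ C | FitsWord (Function.update p j q) u} =
        {u ∈ {u ∈ C | ∀ k, k ≠ j → Fits (p k) (u k)} | Fits q (u j)} := by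
      rw [filter_filter]
      exact filter_congr fun u _ => fitsWord_update_left
    rw [← Function.update_eq_self j p, hsplit]
    refine card_fits_eq_of_threshold (hlohi j) (fun u hu => hb u (mem_filter.1 hu).1 j)
      (fun m hm => ?_) (p j)
    rw [← hsplit]
    refine ih _ fun k hk => ?_
    rcases eq_or_ne k j with rfl | hkj
    · exact ⟨m, hm, Function.update_self ..⟩
    · rw [Function.update_of_ne hkj]
      exact hp k (by simp [hkj, hk])

namespace IsPartitionCode

variable {C : Finset (Word ι R)}

lemma exists_eq_opp (hC : IsPartitionCode C) {u v : Word ι R} (hu : u ∈ C) (hv : v ∈ C)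
    (huv : u ≠ v) : ∃ i, u i = opp (v i) := by
  by_contra! hne
  let p : ι → R → Bool := fun i r => if r = (u i).1 then (u i).2 else (v i).2
  have hpu : FitsWord p u := fun i => by simp [p, Fits]
  have hpv : FitsWord p v := fun i => by
    by_cases hbase : (v i).1 = (u i).1
    · have := (eq_or_eq_opp_of_fst_eq hbase.symm).resolve_right (hne i)
      simp [p, Fits, this]
    · simp [p, Fits, hbase]
  exact huv (card_le_one.1 (hC p).le u (mem_filter.2 ⟨hu, hpu⟩) v (mem_filter.2 ⟨hv, hpv⟩))

lemma card_letter_eq_card_opp (hC : IsPartitionCode C) (p : ι → R → Bool) (i : ι) (a : R × Bool) :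
    #{u ∈ C | u i = a ∧ ∀ k, k ≠ i → Fits (p k) (u k)} =
      #{u ∈ C | u i = opp a ∧ ∀ k, k ≠ i → Fits (p k) (u k)} := by
  have hcard (q : R → Bool) :
      #{u ∈ {u ∈ C | ∀ k, k ≠ i → Fits (p k) (u k)} | Fits q (u i)} = 1 := by
    rw [← hC (Function.update p i q), filter_filter]
    simp only [fitsWord_update_left]
  have key := card_eq_of_card_fits_eq (r := a.1) (q := fun _ => a.2)
    (q' := Function.update (fun _ => a.2) a.1 (!a.2)) ((hcard _).trans (hcard _).symm)
    fun _ _ hr => (Function.update_of_ne hr (!a.2) fun _ => a.2).symm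
  rw [filter_filter, filter_filter, Function.update_self] at key
  convert key using 2 <;> ext u <;> simp only [mem_filter] <;> grind [opp]

end IsPartitionCode

/-- The words of `C` with letter `b` at `i`, with that letter replaced by `a`. -/
noncomputable def relabel (C : Finset (Word ι R)) (i : ι) (b a : R × Bool) : Finset (Word ι R) :=
  {u ∈ C | u i = b}.image fun u => Function.update u i a

lemma mem_relabel {C : Finset (Word ι R)} {i : ι} {a b : R × Bool} {w : Word ι R} :
    w ∈ relabel C i b a ↔ ∃ u ∈ C, u i = b ∧ Function.update u i a = w := by
  simp [relabel, and_assoc]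

lemma injOn_update_of_apply_eq (i : ι) (a b : R × Bool) :
    Set.InjOn (fun u : Word ι R => Function.update u i a) {u | u i = b} := by
  rintro u (hu : u i = b) v (hv : v i = b) huv
  have hback := congrArg (fun w => Function.update w i b) huv
  simp only [Function.update_idem] at hback
  rwa [← hu, Function.update_eq_self, hu, ← hv, Function.update_eq_self] at hback

lemma card_relabel (C : Finset (Word ι R)) (i : ι) (b a : R × Bool) :
    #(relabel C i b a) = #{u ∈ C | u i = b} :=
  card_image_of_injOn <| (injOn_update_of_apply_eq i a b).mono fun _ hu => (mem_filter.1 hu).2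

lemma card_fitsWord_relabel (C : Finset (Word ι R)) (i : ι) (b a : R × Bool) (p : ι → R → Bool) :
    #{w ∈ relabel C i b a | FitsWord p w} =
      #{u ∈ C | (u i = b ∧ ∀ k, k ≠ i → Fits (p k) (u k)) ∧ Fits (p i) a} := by
  rw [relabel, filter_image, card_image_of_injOn, filter_filter]
  · simp only [fitsWord_update_right, and_assoc]
  · exact (injOn_update_of_apply_eq i a b).mono fun _ hu => (mem_filter.1 (mem_filter.1 hu).1).2

namespace IsTwinFreeCode

variable {C : Finset (Word ι R)}

lemma relabel (hC : IsTwinFreeCode C) (i : ι) (b a : R × Bool) :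
    IsTwinFreeCode (relabel C i b a) where
  exists_eq_opp := by
    simp only [mem_relabel]
    rintro _ ⟨u, hu, hui, rfl⟩ _ ⟨v, hv, hvi, rfl⟩ huv
    obtain ⟨j, hj⟩ := hC.exists_eq_opp u hu v hv fun h => huv (by rw [h])
    have hji : j ≠ i := by
      rintro rfl
      exact opp_ne_self b (by rw [← hj.trans (congrArg opp hvi), hui])
    exact ⟨j, by simpa [hji] using hj⟩
  exists_ne := by
    simp only [mem_relabel]
    rintro _ ⟨u, hu, hui, rfl⟩ _ ⟨v, hv, hvi, rfl⟩ j hj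
    have hji : j ≠ i := by
      rintro rfl
      exact opp_ne_self a (by simpa using hj.symm)
    obtain ⟨k, hkj, hk⟩ := hC.exists_ne u hu v hv j (by simpa [hji] using hj)
    have hki : k ≠ i := by
      rintro rfl
      exact hk (hui.trans hvi.symm)
    exact ⟨k, hkj, by simpa [hki] using hk⟩

lemma disjoint_relabel (hC : IsTwinFreeCode C) (i : ι) (a : R × Bool) :
    Disjoint (PolyboxCode.relabel C i a a) (PolyboxCode.relabel C i (opp a) a) := by
  simp only [disjoint_left, mem_relabel]
  rintro _ ⟨u, hu, hui, rfl⟩ ⟨v, hv, hvi, hvu⟩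
  obtain ⟨j, hji, hj⟩ := hC.exists_ne v hv u hu i (by rw [hui, hvi])
  exact hj (by simpa [hji] using congrFun hvu j)

end IsTwinFreeCode

namespace IsPartitionCode

variable {C : Finset (Word ι R)}

-- A pattern and the one that differs from it only in selecting `opp a` instead of `a` at `i` select
-- one word each, so the two families have the same traces on the remaining coordinates.
lemma rivalCodes_relabel (hC : IsPartitionCode C) (hfree : IsTwinFreeCode C) (i : ι)
    (a : R × Bool) : RivalCodes (relabel C i a a) (relabel C i (opp a) a) where
  left := hfree.relabel i a a
  right := hfree.relabel i (opp a) a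
  disjoint := hfree.disjoint_relabel i a
  card_fits p := by
    rw [card_fitsWord_relabel, card_fitsWord_relabel]
    by_cases ha : Fits (p i) a
    · simpa only [ha, and_true] using hC.card_letter_eq_card_opp p i a
    · simp only [ha, and_false]

lemma twentyFour_le_card_base [Finite ι] (hC : IsPartitionCode C) (hfree : IsTwinFreeCode C)
    (i : ι) {u : Word ι R} (hu : u ∈ C) : 24 ≤ #{v ∈ C | (v i).1 = (u i).1} := by
  have hdisj : Disjoint {v ∈ C | v i = u i} {v ∈ C | v i = opp (u i)} :=
    disjoint_filter.2 fun v _ h h' => opp_ne_self (u i) (h'.symm.trans h)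
  calc 24 ≤ #(relabel C i (u i) (u i)) + #(relabel C i (opp (u i)) (u i)) :=
        (hC.rivalCodes_relabel hfree i (u i)).twentyFour_le_card_add_card
          ⟨u, mem_relabel.2 ⟨u, hu, rfl, Function.update_eq_self ..⟩⟩
    _ = #({v ∈ C | v i = u i} ∪ {v ∈ C | v i = opp (u i)}) := by
        rw [card_relabel, card_relabel, card_union_of_disjoint hdisj]
    _ ≤ #{v ∈ C | (v i).1 = (u i).1} := by
        rw [← filter_or]
        refine card_le_card (monotone_filter_right C fun v _ hv => ?_)
        rcases hv with hv | hv <;> simp [hv]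

theorem twentyFour_mul_card_bases_le [Finite ι] (hC : IsPartitionCode C)
    (hfree : IsTwinFreeCode C) (i : ι) : 24 * #(C.image fun u => (u i).1) ≤ #C := by
  refine mul_card_image_le_card (f := fun u : Word ι R => (u i).1) C 24 fun r hr => ?_
  obtain ⟨u, hu, rfl⟩ := mem_image.1 hr
  exact hC.twentyFour_le_card_base hfree i hu

end IsPartitionCode

end PolyboxCode

open PolyboxCode

/-! ### Cubes meeting a test cube -/

section Cubes

variable {d : ℕ} {T : Set (Fin d → ℝ)}

lemma cube_inter_cube_nonempty_iff {t x : Fin d → ℝ} :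
    (cube t ∩ cube x).Nonempty ↔ ∀ j, |t j - x j| < 1 := by
  simp only [abs_lt]
  refine ⟨fun ⟨y, hyt, hyx⟩ j => ?_, fun h => ⟨fun j => max (t j) (x j), fun j => ?_, fun j => ?_⟩⟩
  · have := hyt j
    have := hyx j
    constructor <;> linarith
  · have := h j
    exact ⟨le_max_left _ _, max_lt (by linarith) (by linarith)⟩
  · have := h j
    exact ⟨le_max_right _ _, max_lt (by linarith) (by linarith)⟩

/-- The members of `T` whose cubes meet the cube at `x`. -/
def cubesMeeting (T : Set (Fin d → ℝ)) (x : Fin d → ℝ) : Set (Fin d → ℝ) :=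
  {t ∈ T | (cube t ∩ cube x).Nonempty}

namespace IsCubeTiling

lemma exists_mem_cube (hT : IsCubeTiling T) (y : Fin d → ℝ) : ∃ t ∈ T, y ∈ cube t := by
  have hy : y ∈ ⋃ t ∈ T, cube t := hT.1 ▸ Set.mem_univ y
  simpa only [Set.mem_iUnion, exists_prop] using hy

lemma eq_of_inter_nonempty (hT : IsCubeTiling T) {t s : Fin d → ℝ} (ht : t ∈ T) (hs : s ∈ T)
    (h : (cube t ∩ cube s).Nonempty) : t = s :=
  hT.2.eq ht hs (Set.not_disjoint_iff_nonempty_inter.2 h)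

lemma injOn_cubesMeeting (hT : IsCubeTiling T) (x : Fin d → ℝ) :
    Set.InjOn (fun (t : Fin d → ℝ) j => decide (t j ≤ x j)) (cubesMeeting T x) := by
  intro t ht s hs hts
  refine hT.eq_of_inter_nonempty ht.1 hs.1 (cube_inter_cube_nonempty_iff.2 fun j => ?_)
  have hside : t j ≤ x j ↔ s j ≤ x j := decide_eq_decide.1 (congrFun hts j)
  have htx := abs_lt.1 (cube_inter_cube_nonempty_iff.1 ht.2 j)
  have hsx := abs_lt.1 (cube_inter_cube_nonempty_iff.1 hs.2 j)
  rw [abs_lt]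
  by_cases htj : t j ≤ x j
  · have := hside.1 htj
    constructor <;> linarith
  · have := not_le.1 (mt hside.2 htj)
    constructor <;> linarith

lemma finite_cubesMeeting (hT : IsCubeTiling T) (x : Fin d → ℝ) : (cubesMeeting T x).Finite :=
  .of_injOn (Set.mapsTo_univ _ _) (hT.injOn_cubesMeeting x) Set.finite_univ

lemma ncard_cubesMeeting_le (hT : IsCubeTiling T) (x : Fin d → ℝ) :
    (cubesMeeting T x).ncard ≤ 2 ^ d := by
  simpa using Set.ncard_le_ncard_of_injOn _ (fun _ _ => Set.mem_univ _) (hT.injOn_cubesMeeting x)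

lemma finite_L (hT : IsCubeTiling T) (x : Fin d → ℝ) (i : Fin d) : (L T x i).Finite := by
  refine ((hT.finite_cubesMeeting x).image fun t => t i).subset ?_
  rintro _ ⟨t, ht, rfl, hmeet, -⟩
  exact ⟨t, ⟨ht, hmeet⟩, rfl⟩

lemma countable (hT : IsCubeTiling T) : T.Countable := by
  have hinj : Set.InjOn (fun (t : Fin d → ℝ) j => ⌈t j⌉) T := by
    intro t ht s hs hts
    have hceil (u : Fin d → ℝ) : (fun j => (⌈u j⌉ : ℝ)) ∈ cube u := fun j =>
      ⟨Int.le_ceil _, Int.ceil_lt_add_one _⟩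
    refine hT.eq_of_inter_nonempty ht hs ⟨_, hceil t, ?_⟩
    simpa only [congrFun hts] using hceil s
  exact (Set.mapsTo_univ _ _).countable_of_injOn hinj Set.countable_univ

end IsCubeTiling

/-! ### The code of a test cube -/

/-- The letter of a cube with coordinate `t` relative to a test cube with coordinate `x`. For
`x - 1 < t < x + 1` with `t ≠ x` the base is the representative of `t` modulo `1` in `(x - 1, x)`,
and the sign records whether the cube sticks out below or above the test cube. -/
noncomputable def coordLetter (x t : ℝ) : ℝ × Bool :=
  if t < x then (t, true) else (t - 1, false)

lemma coordLetter_injective (x : ℝ) : Function.Injective (coordLetter x) := by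
  intro t s h
  unfold coordLetter at h
  split_ifs at h <;> simp_all

lemma abs_sub_eq_one_of_coordLetter_eq_opp {x t s : ℝ}
    (h : coordLetter x t = opp (coordLetter x s)) : |t - s| = 1 := by
  unfold coordLetter at h
  split_ifs at h <;> simp only [opp, Prod.mk.injEq, reduceCtorEq, and_false, Bool.not_true,
    Bool.not_false, and_true] at h
  · simp [h]
  · simp [← h]

lemma coordLetter_fst_mem_Ioo {x t : ℝ} (h : |t - x| < 1) (hne : t ≠ x) :
    (coordLetter x t).1 ∈ Set.Ioo (x - 1) x := by
  rw [abs_lt] at h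
  unfold coordLetter
  split_ifs with htx
  · exact ⟨by linarith, htx⟩
  · have := lt_of_le_of_ne (not_lt.1 htx) hne.symm
    exact ⟨by linarith, by linarith⟩

-- The threshold `m ∈ [x - 1, x)` corresponds to the point `m + 1` of `[x, x + 1)`.
lemma fits_threshold_coordLetter_iff {x t m : ℝ} (hm : m ∈ Set.Ico (x - 1) x) :
    Fits (fun r => decide (m < r)) (coordLetter x t) ↔ t ≤ m + 1 ∧ m + 1 < t + 1 := by
  obtain ⟨hxm, hmx⟩ := hm
  unfold coordLetter Fits
  split_ifs with htx <;> simp only [decide_eq_true_eq, decide_eq_false_iff_not] <;> grind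

/-- The word of the cube at `t` relative to the test cube at `x`. -/
noncomputable def cubeWord (x t : Fin d → ℝ) : Word (Fin d) ℝ := fun j => coordLetter (x j) (t j)

lemma isTwinPair_of_cubeWord {x t s : Fin d → ℝ} {j : Fin d}
    (hj : cubeWord x t j = opp (cubeWord x s j))
    (hne : ∀ k, k ≠ j → cubeWord x t k = cubeWord x s k) : IsTwinPair t s :=
  ⟨j, abs_sub_eq_one_of_coordLetter_eq_opp hj, fun k hk => coordLetter_injective _ (hne k hk)⟩

namespace IsCubeTiling

/-- The words of the cubes that meet the test cube at `x`. -/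
noncomputable def code (hT : IsCubeTiling T) (x : Fin d → ℝ) : Finset (Word (Fin d) ℝ) :=
  ((hT.finite_cubesMeeting x).image (cubeWord x)).toFinset

lemma mem_code {hT : IsCubeTiling T} {x : Fin d → ℝ} {u : Word (Fin d) ℝ} :
    u ∈ hT.code x ↔ ∃ t ∈ cubesMeeting T x, cubeWord x t = u := by
  simp [code]

lemma card_code_le (hT : IsCubeTiling T) (x : Fin d → ℝ) : #(hT.code x) ≤ 2 ^ d := by
  rw [code, ← Set.ncard_eq_toFinset_card _ ((hT.finite_cubesMeeting x).image _)]
  exact (Set.ncard_image_le (hT.finite_cubesMeeting x)).trans (hT.ncard_cubesMeeting_le x)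

attribute [local instance] Classical.propDecidable

-- A threshold pattern selects the cubes that contain the corresponding point of the test cube.
lemma card_fitsWord_threshold_code (hT : IsCubeTiling T) {x m : Fin d → ℝ}
    (hm : ∀ j, m j ∈ Set.Ico (x j - 1) (x j)) :
    #{u ∈ hT.code x | FitsWord (fun j r => decide (m j < r)) u} = 1 := by
  have hfits (t : Fin d → ℝ) : FitsWord (fun j r => decide (m j < r)) (cubeWord x t) ↔
      (fun j => m j + 1) ∈ cube t :=
    forall_congr' fun j => fits_threshold_coordLetter_iff (hm j)
  have hmx : (fun j => m j + 1) ∈ cube x := fun j => by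
    have := hm j
    constructor <;> grind
  obtain ⟨t, ht, hmt⟩ := hT.exists_mem_cube fun j => m j + 1
  refine card_eq_one.2 ⟨cubeWord x t, eq_singleton_iff_unique_mem.2 ⟨?_, ?_⟩⟩
  · exact mem_filter.2 ⟨mem_code.2 ⟨t, ⟨ht, _, hmt, hmx⟩, rfl⟩, (hfits t).2 hmt⟩
  · intro u hu
    obtain ⟨hu, hfit⟩ := mem_filter.1 hu
    obtain ⟨s, hs, rfl⟩ := mem_code.1 hu
    rw [hT.eq_of_inter_nonempty hs.1 ht ⟨_, (hfits s).1 hfit, hmt⟩]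

lemma isPartitionCode_code (hT : IsCubeTiling T) {x : Fin d → ℝ}
    (hx : ∀ t ∈ T, ∀ j, t j ≠ x j) : IsPartitionCode (hT.code x) := by
  refine card_fitsWord_eq_of_threshold (lo := fun j => x j - 1) (hi := x)
    (fun j => sub_one_lt (x j)) (fun u hu j => ?_) fun m hm => ?_
  · obtain ⟨t, ht, rfl⟩ := mem_code.1 hu
    exact coordLetter_fst_mem_Ioo (cube_inter_cube_nonempty_iff.1 ht.2 j) (hx t ht.1 j)
  · exact hT.card_fitsWord_threshold_code hm

lemma isTwinFreeCode_code (hT : IsCubeTiling T) {x : Fin d → ℝ}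
    (hx : ∀ t ∈ T, ∀ j, t j ≠ x j) (hfree : ∀ t ∈ T, ∀ s ∈ T, ¬ IsTwinPair t s) :
    IsTwinFreeCode (hT.code x) where
  exists_eq_opp _ hu _ hv := (hT.isPartitionCode_code hx).exists_eq_opp hu hv
  exists_ne u hu v hv j hj := by
    obtain ⟨t, ht, rfl⟩ := mem_code.1 hu
    obtain ⟨s, hs, rfl⟩ := mem_code.1 hv
    by_contra! hne
    exact hfree t ht.1 s hs.1 (isTwinPair_of_cubeWord hj hne)

lemma twentyFour_mul_ncard_L_le_of_generic (hT : IsCubeTiling T) {x : Fin d → ℝ}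
    (hx : ∀ t ∈ T, ∀ j, t j ≠ x j) (hfree : ∀ t ∈ T, ∀ s ∈ T, ¬ IsTwinPair t s) (i : Fin d) :
    24 * (L T x i).ncard ≤ 2 ^ d := by
  have hsub : L T x i ⊆ ((hT.code x).image fun u => (u i).1 : Finset ℝ) := by
    rintro _ ⟨t, ht, rfl, hmeet, hle⟩
    refine mem_coe.2 (mem_image.2 ⟨cubeWord x t, mem_code.2 ⟨t, ⟨ht, hmeet⟩, rfl⟩, ?_⟩)
    simp [cubeWord, coordLetter, lt_of_le_of_ne hle (hx t ht i)]
  calc 24 * (L T x i).ncard ≤ 24 * #((hT.code x).image fun u => (u i).1) := by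
        grw [Set.ncard_le_ncard hsub, Set.ncard_coe_finset]
    _ ≤ #(hT.code x) := (hT.isPartitionCode_code hx).twentyFour_mul_card_bases_le
        (hT.isTwinFreeCode_code hx hfree) i
    _ ≤ 2 ^ d := hT.card_code_le x

/-! ### Moving the test cube into general position -/

open Filter Topology in
lemma exists_generic_L_subset (hT : IsCubeTiling T) (x : Fin d → ℝ) :
    ∃ y : Fin d → ℝ, (∀ t ∈ T, ∀ j, t j ≠ y j) ∧ ∀ i, L T x i ⊆ L T y i := by
  have hmeet : ∀ᶠ ε in 𝓝[>] (0 : ℝ), ∀ t ∈ cubesMeeting T x, ∀ j, |t j - (x j + ε)| < 1 := by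
    refine (eventually_all_finite (hT.finite_cubesMeeting x)).2 fun t ht => ?_
    refine eventually_all.2 fun j => ?_
    have hcont : Continuous fun ε : ℝ => |t j - (x j + ε)| := by fun_prop
    refine (hcont.tendsto 0).mono_left nhdsWithin_le_nhds |>.eventually_lt_const ?_
    simpa using cube_inter_cube_nonempty_iff.1 ht.2 j
  obtain ⟨δ, hδ, hsub⟩ := mem_nhdsGT_iff_exists_Ioo_subset.1 hmeet
  have hcount : (⋃ j : Fin d, (fun t : Fin d → ℝ => t j - x j) '' T).Countable :=
    Set.countable_iUnion fun j => hT.countable.image _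
  obtain ⟨ε, hε, hεδ⟩ := (hcount.dense_compl ℝ).exists_between hδ
  refine ⟨fun j => x j + ε, fun t ht j h => hε ?_, ?_⟩
  · exact Set.mem_iUnion.2 ⟨j, t, ht, by simp [h]⟩
  · rintro i _ ⟨t, ht, rfl, htx, hle⟩
    exact ⟨t, ht, rfl, cube_inter_cube_nonempty_iff.2 (hsub hεδ t ⟨ht, htx⟩),
      hle.trans (le_add_of_nonneg_right hεδ.1.le)⟩

theorem twentyFour_mul_rplus_le (hT : IsCubeTiling T)
    (hfree : ∀ t ∈ T, ∀ s ∈ T, ¬ IsTwinPair t s) : 24 * rplus T ≤ 2 ^ d := by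
  have hL (x : Fin d → ℝ) (i : Fin d) : (L T x i).ncard ≤ 2 ^ d / 24 := by
    obtain ⟨y, hy, hxy⟩ := hT.exists_generic_L_subset x
    rw [Nat.le_div_iff_mul_le (by norm_num), mul_comm]
    grw [Set.ncard_le_ncard (hxy i) (hT.finite_L y i)]
    exact hT.twentyFour_mul_ncard_L_le_of_generic hy hfree i
  have hr : rplus T ≤ 2 ^ d / 24 := ciSup_le' fun x => ciSup_le' fun i => hL x i
  rwa [Nat.le_div_iff_mul_le (by norm_num), mul_comm] at hr

end IsCubeTiling

end Cubes

/-- If `[0,1)^d + T` is a cube tiling of `ℝ^d` and `r⁺(T) > 2^(d-3)/3`, then the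
tiling contains a twin pair. -/
theorem twinPair_of_rplus_gt {d : ℕ} (T : Set (Fin d → ℝ))
    (hT : IsCubeTiling T) (h : (rplus T : ℝ) > 2 ^ ((d : ℤ) - 3) / 3) :
    ∃ t ∈ T, ∃ s ∈ T, IsTwinPair t s := by
  by_contra! hfree
  have hle : 24 * (rplus T : ℝ) ≤ 2 ^ d := mod_cast hT.twentyFour_mul_rplus_le hfree
  have hpow : (2 : ℝ) ^ ((d : ℤ) - 3) = 2 ^ d / 8 := by
    rw [zpow_sub₀ two_ne_zero, zpow_natCast]
    norm_num
  linarith
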